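/- arXiv:2411.10805 — 2 statements merged into one kernel-verified Lean document; each statement's English description precedes it below -/
import Mathlib

section
/- Under the compact nonzero-sum game setup with the quantization condition lim_{δ→0} ω_δ(2δ) = 0 and horizon T ∈ ℕ: for every ε > 0 there exists δ(ε) > 0 such that for all 0 < δ ≤ δ(ε), any Markov perfect Nash equilibrium π*_δ of the finite δ-model, extended to X via Q_δ, is a Markov perfect ε-Nash equilibrium of the original game; that is, for every player i = 1,…,N and every x ∈ X, J^i_0(π*_δ; x) ≤ J*_0(π^{*,-i}_δ; x) + ε, where J*_0(π^{*,-i}_δ;·) is the best-response value of player i (which equals the infimum over all policies of player i of the expected T-stage cost against the extended policies π^{*,-i}_δ). -/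
open MeasureTheory Filter Topology

noncomputable section

/-- Total variation distance between two measures:
`‖μ − ν‖_TV = 2 sup_{D measurable} |μ(D) − ν(D)|`. -/
def tvDist {α : Type*} [MeasurableSpace α] (μ ν : Measure α) : ℝ :=
  2 * ⨆ D : {D : Set α // MeasurableSet D}, |(μ D.1).toReal - (ν D.1).toReal|

/-- The normalized restriction `ν^z_δ` of `ν` to the quantization cell `Q⁻¹{z}`. -/
def cellMeasure {X : Type*} [MeasurableSpace X] (ν : Measure X) (Q : X → X) (z : X) :
    Measure X :=
  (ν (Q ⁻¹' {z}))⁻¹ • ν.restrict (Q ⁻¹' {z})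

theorem aux_integral_fin {X Y : Type*} [MeasurableSpace X] [MeasurableSpace Y]
    [MeasurableSingletonClass Y] (s : Finset Y) (Q : X → Y) (hQ : Measurable Q)
    (hs : ∀ x, Q x ∈ s) (f : Y → ℝ) (μ : Measure X) [IsProbabilityMeasure μ] :
    ∫ x, f (Q x) ∂μ = ∑ z ∈ s, f z * μ.real (Q ⁻¹' {z}) := by
  classical
  have h : (fun x => f (Q x)) = fun x => ∑ z ∈ s, (Q ⁻¹' {z}).indicator (fun _ => f z) x := by
    funext x
    rw [Finset.sum_eq_single (Q x)]
    · simp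
    · intro b _ hb
      simp [Set.indicator, hb.symm]
    · intro h; exact absurd (hs x) h
  rw [h, integral_finsetSum]
  · refine Finset.sum_congr rfl fun z _ => ?_
    rw [integral_indicator (hQ (measurableSet_singleton z)), setIntegral_const, smul_eq_mul, mul_comm]
  · intro z _
    exact (integrable_const _).indicator (hQ (measurableSet_singleton z))

theorem aux_measurable_cell {X Y : Type*} [MeasurableSpace X] [MeasurableSpace Y]
    [MeasurableSingletonClass Y] (s : Finset Y) (Q : X → Y) (hQ : Measurable Q)
    (hs : ∀ x, Q x ∈ s) (F : Y → X → ℝ) (hF : ∀ z ∈ s, Measurable (F z)) :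
    Measurable fun x => F (Q x) x := by
  classical
  have h : (fun x => F (Q x) x) = fun x => ∑ z ∈ s, (Q ⁻¹' {z}).indicator (F z) x := by
    funext x
    rw [Finset.sum_eq_single (Q x)]
    · simp
    · intro b _ hb
      simp [Set.indicator, hb.symm]
    · intro h; exact absurd (hs x) h
  rw [h]
  exact Finset.measurable_sum _ fun z hz => (hF z hz).indicator (hQ (measurableSet_singleton z))

theorem aux_integrable {X : Type*} [MeasurableSpace X] (μ : Measure X) [IsProbabilityMeasure μ]
    (f : X → ℝ) (hf : Measurable f) (M : ℝ) (hM : ∀ x, |f x| ≤ M) : Integrable f μ :=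
  Integrable.of_bound hf.aestronglyMeasurable M (Eventually.of_forall hM)

theorem aux_abs_le {X : Type*} [MeasurableSpace X] (μ : Measure X) [IsProbabilityMeasure μ]
    (f : X → ℝ) (M : ℝ) (hM : ∀ x, |f x| ≤ M) : |∫ x, f x ∂μ| ≤ M := by
  have := norm_integral_le_of_norm_le_const (μ := μ) (f := f) (C := M) (Eventually.of_forall hM)
  simpa using this

theorem aux_le {X : Type*} [MeasurableSpace X] (μ : Measure X) [IsProbabilityMeasure μ]
    (f g : X → ℝ) (hf : Integrable f μ) (hg : Integrable g μ) (k : ℝ)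
    (hM : ∀ᵐ x ∂μ, f x ≤ g x + k) : ∫ x, f x ∂μ ≤ ∫ x, g x ∂μ + k := by
  have h : ∫ x, f x ∂μ ≤ ∫ x, (g x + k) ∂μ :=
    integral_mono_ae hf (hg.add (integrable_const k)) hM
  rw [integral_add hg (integrable_const k)] at h
  simpa using h

theorem aux_cont_kernel {X W : Type*} [MeasurableSpace X] [TopologicalSpace W]
    (κ : W → Measure X) (hκ : ∀ w, IsProbabilityMeasure (κ w))
    (hcont : ∀ D, MeasurableSet D → Continuous fun w => (κ w D).toReal)
    (f : X → ℝ) (hf : Measurable f) (M : ℝ) (hM : ∀ x, |f x| ≤ M) :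
    Continuous fun w => ∫ y, f y ∂(κ w) := by
  let q : ℕ → X → ℤ := fun n y => ⌊((n:ℝ)+1) * f y⌋
  have hq : ∀ n, Measurable (q n) := fun n => (hf.const_mul _).floor
  let s : ℕ → Finset ℤ := fun n => Finset.Icc ⌊-((n+1:ℝ) * M)⌋ ⌊(n+1:ℝ) * M⌋
  have hs : ∀ n y, q n y ∈ s n := by
    intro n y
    have h1 := abs_le.1 (hM y)
    have hn : (0:ℝ) ≤ (n:ℝ)+1 := by positivity
    rw [Finset.mem_Icc]
    constructor <;> apply Int.floor_le_floor
    · nlinarith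
    · nlinarith
  have hU : TendstoUniformly (fun (n : ℕ) w => ∫ y, ((q n y : ℤ) : ℝ) / ((n:ℝ)+1) ∂(κ w))
      (fun w => ∫ y, f y ∂(κ w)) atTop := by
    rw [Metric.tendstoUniformly_iff]
    intro ε hε
    have := tendsto_one_div_add_atTop_nhds_zero_nat (𝕜 := ℝ)
    filter_upwards [this.eventually (gt_mem_nhds hε)] with n hn w
    have := hκ w
    have hn0 : (0:ℝ) < (n:ℝ)+1 := by positivity
    have hb : ∀ y, |f y - ((q n y : ℤ) : ℝ) / ((n:ℝ)+1)| ≤ 1 / ((n:ℝ)+1) := by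
      intro y
      have h1 := Int.floor_le (((n:ℝ)+1) * f y)
      have h2 := Int.lt_floor_add_one (((n:ℝ)+1) * f y)
      have e : f y - ((q n y : ℤ) : ℝ) / ((n:ℝ)+1) = (((n:ℝ)+1) * f y - (q n y : ℤ)) / ((n:ℝ)+1) := by
        field_simp
      rw [e, abs_div, abs_of_pos hn0]
      gcongr
      rw [abs_le]; constructor <;> simp only [q] <;> linarith
    have hmq : Measurable fun y => ((q n y : ℤ) : ℝ) / ((n:ℝ)+1) :=
      ((measurable_from_top (f := fun k : ℤ => (k:ℝ))).comp (hq n)).div_const _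
    rw [Real.dist_eq, ← integral_sub (aux_integrable _ f hf M hM)]
    · exact (aux_abs_le _ _ _ hb).trans_lt hn
    · refine aux_integrable _ _ hmq (M + 1 / ((n:ℝ)+1)) fun y => ?_
      have := hb y
      have := hM y
      rw [abs_le] at *
      constructor <;> linarith
  refine hU.continuous (Frequently.of_forall fun n => ?_)
  have : (fun w => ∫ y, ((q n y : ℤ) : ℝ) / ((n:ℝ)+1) ∂(κ w)) =
      fun w => ∑ z ∈ s n, ((z:ℝ) / ((n:ℝ)+1)) * (κ w).real (q n ⁻¹' {z}) := by
    funext w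
    have := hκ w
    exact aux_integral_fin (s n) (q n) (hq n) (hs n) (fun z : ℤ => (z:ℝ) / ((n:ℝ)+1)) (κ w)
  rw [this]
  exact continuous_finsetSum _ fun z _ =>
    continuous_const.mul (hcont _ (hq n (measurableSet_singleton z)))

theorem aux_cont_param {X B : Type*} [TopologicalSpace X] [FirstCountableTopology X]
    [TopologicalSpace B] [SecondCountableTopology B]
    [MeasurableSpace B] [BorelSpace B] (g : X → B → ℝ)
    (hg : Continuous fun q : X × B => g q.1 q.2) (M : ℝ) (hM : ∀ x b, |g x b| ≤ M)
    (μ : Measure B) [IsProbabilityMeasure μ] : Continuous fun x => ∫ b, g x b ∂μ := by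
  refine continuous_of_dominated (bound := fun _ => M) ?_ ?_ (integrable_const M) ?_
  · intro x
    exact (hg.comp (Continuous.prodMk_right x)).measurable.aestronglyMeasurable
  · intro x; exact Eventually.of_forall (hM x)
  · exact Eventually.of_forall fun b => hg.comp (Continuous.prodMk_left b)

theorem aux_tv_bdd {X : Type*} [MeasurableSpace X] (μ ν : Measure X) [IsProbabilityMeasure μ]
    [IsProbabilityMeasure ν] :
    ∀ D : {D : Set X // MeasurableSet D}, |(μ D.1).toReal - (ν D.1).toReal| ≤ 1 := by
  intro D
  have h1 : (μ D.1).toReal ≤ 1 := measureReal_le_one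
  have h2 : (ν D.1).toReal ≤ 1 := measureReal_le_one
  have h3 : 0 ≤ (μ D.1).toReal := ENNReal.toReal_nonneg
  have h4 : 0 ≤ (ν D.1).toReal := ENNReal.toReal_nonneg
  rw [abs_le]; constructor <;> linarith

theorem aux_tv_le {X : Type*} [MeasurableSpace X] (μ ν : Measure X) [IsProbabilityMeasure μ]
    [IsProbabilityMeasure ν] : tvDist μ ν ≤ 2 := by
  have : Nonempty {D : Set X // MeasurableSet D} := ⟨⟨∅, MeasurableSet.empty⟩⟩
  have := ciSup_le (aux_tv_bdd μ ν)
  unfold tvDist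
  linarith

theorem aux_tv {X : Type*} [MeasurableSpace X] [MeasurableSingletonClass X]
    (s : Finset X) (Q : X → X) (hQ : Measurable Q)
    (hs : ∀ x, Q x ∈ s) (f : X → ℝ) (M : ℝ) (hM : ∀ x, |f x| ≤ M)
    (μ ν : Measure X) [IsProbabilityMeasure μ] [IsProbabilityMeasure ν] :
    |∫ x, f (Q x) ∂μ - ∫ x, f (Q x) ∂ν| ≤ M * tvDist (μ.map Q) (ν.map Q) := by
  classical
  rcases isEmpty_or_nonempty X with hX | hX
  · exact absurd (measure_univ (μ := μ)) (by simp [Set.univ_eq_empty_iff.2 hX])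
  have hM0 : 0 ≤ M := (abs_nonneg _).trans (hM hX.some)
  have := Measure.isProbabilityMeasure_map (μ := μ) hQ.aemeasurable
  have := Measure.isProbabilityMeasure_map (μ := ν) hQ.aemeasurable
  have key : ∀ P : Finset X, |∑ z ∈ P, (μ.real (Q ⁻¹' {z}) - ν.real (Q ⁻¹' {z}))| ≤
      tvDist (μ.map Q) (ν.map Q) / 2 := by
    intro P
    have e : ∀ (ρ : Measure X) [IsProbabilityMeasure ρ],
        ∑ z ∈ P, ρ.real (Q ⁻¹' {z}) = ((ρ.map Q) (P : Set X)).toReal := by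
      intro ρ _
      have := Measure.isProbabilityMeasure_map (μ := ρ) hQ.aemeasurable
      rw [← measureReal_def, ← sum_measureReal_singleton (μ := ρ.map Q) P]
      refine Finset.sum_congr rfl fun z _ => ?_
      rw [map_measureReal_apply hQ (measurableSet_singleton z)]
    rw [Finset.sum_sub_distrib, e μ, e ν]
    have hb : BddAbove (Set.range fun D : {D : Set X // MeasurableSet D} =>
        |((μ.map Q) D.1).toReal - ((ν.map Q) D.1).toReal|) :=
      ⟨1, by rintro _ ⟨D, rfl⟩; exact aux_tv_bdd _ _ D⟩
    have := le_ciSup hb ⟨(P : Set X), P.measurableSet⟩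
    unfold tvDist
    simp only at this
    linarith
  rw [aux_integral_fin s Q hQ hs, aux_integral_fin s Q hQ hs, ← Finset.sum_sub_distrib]
  have h1 := key (s.filter fun z => 0 ≤ μ.real (Q ⁻¹' {z}) - ν.real (Q ⁻¹' {z}))
  have h2 := key (s.filter fun z => ¬ 0 ≤ μ.real (Q ⁻¹' {z}) - ν.real (Q ⁻¹' {z}))
  have h3 : ∑ z ∈ s, |μ.real (Q ⁻¹' {z}) - ν.real (Q ⁻¹' {z})| ≤ tvDist (μ.map Q) (ν.map Q) := by
    rw [← Finset.sum_filter_add_sum_filter_not s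
      (fun z => 0 ≤ μ.real (Q ⁻¹' {z}) - ν.real (Q ⁻¹' {z}))]
    have e1 := Finset.sum_congr rfl
      (fun z (hz : z ∈ s.filter fun z => 0 ≤ μ.real (Q ⁻¹' {z}) - ν.real (Q ⁻¹' {z})) =>
        abs_of_nonneg (Finset.mem_filter.1 hz).2)
    have e2 := Finset.sum_congr rfl
      (fun z (hz : z ∈ s.filter fun z => ¬ 0 ≤ μ.real (Q ⁻¹' {z}) - ν.real (Q ⁻¹' {z})) =>
        abs_of_neg (not_le.1 (Finset.mem_filter.1 hz).2))
    rw [e1, e2, Finset.sum_neg_distrib]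
    have := (abs_le.1 h1).2
    have := (abs_le.1 h2).1
    linarith
  calc _ ≤ ∑ z ∈ s, |f z * μ.real (Q ⁻¹' {z}) - f z * ν.real (Q ⁻¹' {z})| :=
        Finset.abs_sum_le_sum_abs _ _
    _ ≤ ∑ z ∈ s, M * |μ.real (Q ⁻¹' {z}) - ν.real (Q ⁻¹' {z})| := by
        refine Finset.sum_le_sum fun z _ => ?_
        rw [← mul_sub, abs_mul]
        exact mul_le_mul_of_nonneg_right (hM z) (abs_nonneg _)
    _ ≤ _ := by
        rw [← Finset.mul_sum]
        exact mul_le_mul_of_nonneg_left h3 hM0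

theorem aux_pi_update {ι : Type*} [Fintype ι] [DecidableEq ι] {A : ι → Type*}
    [∀ i, MeasurableSpace (A i)] (μ : ∀ i, Measure (A i)) [∀ i, IsProbabilityMeasure (μ i)]
    (i : ι) (a : A i) :
    Measure.pi (Function.update μ i (Measure.dirac a)) =
      (Measure.pi μ).map (fun b => Function.update b i a) := by
  have hpr : ∀ j, IsProbabilityMeasure (Function.update μ i (Measure.dirac a) j) := by
    intro j
    by_cases h : j = i
    · subst h; simp; infer_instance
    · simp [h]; infer_instance
  have hmeas : Measurable (fun b : ∀ j, A j => Function.update b i a) := by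
    fun_prop
  refine Measure.pi_eq fun s hs => ?_
  rw [Measure.map_apply hmeas (MeasurableSet.univ_pi hs)]
  by_cases ha : a ∈ s i
  · have : (fun b : ∀ j, A j => Function.update b i a) ⁻¹' Set.univ.pi s =
        Set.univ.pi (Function.update s i Set.univ) := by
      ext b
      simp only [Set.mem_preimage, Set.mem_pi, Set.mem_univ, true_imp_iff]
      refine forall_congr' fun j => ?_
      by_cases h : j = i
      · subst h; simp [ha]
      · simp [h]
    rw [this, Measure.pi_pi]
    refine Finset.prod_congr rfl fun j _ => ?_
    by_cases h : j = i
    · subst h; simp [ha]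
    · simp [h]
  · have : (fun b : ∀ j, A j => Function.update b i a) ⁻¹' Set.univ.pi s = ∅ := by
      ext b
      simp only [Set.mem_preimage, Set.mem_pi, Set.mem_univ, true_imp_iff, Set.mem_empty_iff_false,
        iff_false, not_forall]
      exact ⟨i, by simpa using ha⟩
    rw [this, measure_empty]
    symm
    refine Finset.prod_eq_zero (Finset.mem_univ i) ?_
    simp [ha, Measure.dirac_apply' a (hs i)]

theorem aux_cell_prob {X : Type*} [MeasurableSpace X] (ν : Measure X) [IsProbabilityMeasure ν]
    (Q : X → X) (z : X) (h : 0 < ν (Q ⁻¹' {z})) : IsProbabilityMeasure (cellMeasure ν Q z) := by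
  constructor
  simp only [cellMeasure, Measure.smul_apply, Measure.restrict_apply_univ, smul_eq_mul]
  exact ENNReal.inv_mul_cancel h.ne' (measure_ne_top _ _)

theorem aux_cell_ae {X : Type*} [MeasurableSpace X] [MeasurableSingletonClass X] (ν : Measure X)
    (Q : X → X) (hQ : Measurable Q) (z : X) : ∀ᵐ x ∂(cellMeasure ν Q z), Q x = z := by
  unfold cellMeasure
  exact Measure.ae_smul_measure (ae_restrict_mem (hQ (measurableSet_singleton z))) _

theorem aux_step {X : Type*} [MetricSpace X] [CompactSpace X]
    [MeasurableSpace X] [BorelSpace X]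
    {N : ℕ} {A : Fin N → Type*} [∀ i, MetricSpace (A i)] [∀ i, CompactSpace (A i)]
    [∀ i, Nonempty (A i)] [∀ i, MeasurableSpace (A i)] [∀ i, BorelSpace (A i)]
    (c : X → (∀ i, A i) → ℝ)
    (hc : Continuous fun q : X × (∀ i, A i) => c q.1 q.2)
    (C : ℝ) (hC : ∀ x b, |c x b| ≤ C)
    (p : X → (∀ i, A i) → Measure X)
    (hp_prob : ∀ x a, IsProbabilityMeasure (p x a))
    (hp_setwise : ∀ D : Set X, MeasurableSet D →
      Continuous fun q : X × (∀ i, A i) => (p q.1 q.2 D).toReal)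
    (S : Finset X) (Q : X → X) (i : Fin N) (Ad : Finset (A i)) (ν : Measure X)
    [IsProbabilityMeasure ν] (δ : ℝ)
    (hQ_mem : ∀ x, Q x ∈ S) (hQ_meas : Measurable Q) (hQ_dist : ∀ x, dist x (Q x) ≤ δ)
    (hAd_net : ∀ a : A i, ∃ b ∈ Ad, dist a b ≤ δ)
    (hν_pos : ∀ z ∈ S, 0 < ν (Q ⁻¹' {z}))
    (μ : ∀ j, X → Measure (A j)) (hμ : ∀ j x, IsProbabilityMeasure (μ j x))
    (hμQ : ∀ j x, μ j x = μ j (Q x))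
    (jd js ji jd' js' ji' : X → ℝ) (R η e₁ e₂ : ℝ)
    (hδ : 0 < δ)
    (hji : Measurable ji) (hjs : Measurable js)
    (hjdR : ∀ x, |jd x| ≤ R) (hjsR : ∀ x, |js x| ≤ R) (hjiR : ∀ x, |ji x| ≤ R)
    (hjdQ : ∀ x, jd x = jd (Q x)) (hjdQ' : ∀ x, jd' x = jd' (Q x))
    (hosc : ∀ x x' b b', dist x x' + dist b b' ≤ 2 * δ →
      |(c x b + ∫ y, jd y ∂(p x b)) - (c x' b' + ∫ y, jd y ∂(p x' b'))| ≤ η)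
    (h₁ : ∀ x, ji x ≤ jd x + e₁) (h₂ : ∀ x, jd x ≤ js x + e₂)
    (ejd : ∀ z ∈ S, jd' z = sInf {v : ℝ | ∃ a ∈ Ad, v =
          ∫ x, (∫ b, (c x b + ∫ y, jd y ∂(p x b))
              ∂(Measure.pi (Function.update (fun j => μ j z) i (Measure.dirac a))))
            ∂(cellMeasure ν Q z)})
    (ejd' : ∀ z ∈ S, jd' z =
          ∫ x, (∫ b, (c x b + ∫ y, jd y ∂(p x b))
              ∂(Measure.pi fun j => μ j z))
            ∂(cellMeasure ν Q z))
    (ejs : ∀ x : X, js' x = ⨅ a : A i,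
          ∫ b, (c x b + ∫ y, js y ∂(p x b))
            ∂(Measure.pi (Function.update (fun j => μ j x) i (Measure.dirac a))))
    (eji : ∀ x : X, ji' x =
          ∫ b, (c x b + ∫ y, ji y ∂(p x b)) ∂(Measure.pi fun j => μ j x)) :
    Measurable ji' ∧ Measurable js' ∧ (∀ x, |jd' x| ≤ C + R) ∧ (∀ x, |js' x| ≤ C + R) ∧
    (∀ x, |ji' x| ≤ C + R) ∧ (∀ x, ji' x ≤ jd' x + (e₁ + η)) ∧
    (∀ x, jd' x ≤ js' x + (e₂ + 2 * η)) := by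
  have : ∀ j, SecondCountableTopology (A j) := fun j => inferInstance
  have hμu : ∀ z a, IsProbabilityMeasure
      (Measure.pi (Function.update (fun j => μ j z) i (Measure.dirac a))) := by
    intro z a
    have : ∀ j, IsProbabilityMeasure (Function.update (fun j => μ j z) i (Measure.dirac a) j) := by
      intro j
      by_cases h : j = i
      · subst h; simp; infer_instance
      · simp [h]; infer_instance
    infer_instance
  have hcell := fun z hz => aux_cell_prob ν Q z (hν_pos z hz)
  have hjd : Measurable jd := by
    have := aux_measurable_cell S Q hQ_meas hQ_mem (fun z _ => jd z) (fun z _ => measurable_const)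
    simpa only [← hjdQ] using this
  -- the one-stage functional
  obtain ⟨G, hG⟩ : ∃ G : (X → ℝ) → X → (∀ j, A j) → ℝ,
    ∀ f x b, c x b + ∫ y, f y ∂(p x b) = G f x b := ⟨_, fun _ _ _ => rfl⟩
  simp only [hG] at hosc ejd ejd' ejs eji
  have hGc : ∀ f, Measurable f → (∀ x, |f x| ≤ R) →
      Continuous fun q : X × (∀ j, A j) => G f q.1 q.2 := by
    intro f hf hfR
    simp only [← hG]
    exact hc.add (aux_cont_kernel (fun q : X × (∀ j, A j) => p q.1 q.2)
      (fun q => hp_prob _ _) hp_setwise f hf R hfR)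
  have hGb : ∀ f, (∀ x, |f x| ≤ R) → ∀ x b, |G f x b| ≤ C + R := by
    intro f hfR x b
    rw [← hG]
    exact (abs_add_le _ _).trans (add_le_add (hC x b) (aux_abs_le _ f R hfR))
  have hGm : ∀ f, Measurable f → (∀ x, |f x| ≤ R) → ∀ x, Measurable (G f x) := by
    intro f hf hfR x
    exact ((hGc f hf hfR).comp (Continuous.prodMk_right x)).measurable
  have hGle : ∀ f g k, Measurable f → (∀ x, |f x| ≤ R) → Measurable g → (∀ x, |g x| ≤ R) →
      (∀ x, f x ≤ g x + k) → ∀ x b, G f x b ≤ G g x b + k := by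
    intro f g k hf hfR hg hgR h x b
    have := aux_le (p x b) f g (aux_integrable _ f hf R hfR) (aux_integrable _ g hg R hgR) k
      (Eventually.of_forall h)
    rw [← hG, ← hG]
    linarith
  have hcd : ∀ x x', Q x' = Q x → dist x x' ≤ 2 * δ := by
    intro x x' h
    have h1 := hQ_dist x
    have h2 := hQ_dist x'
    rw [h, dist_comm] at h2
    linarith [dist_triangle x (Q x) x']
  have hpiX : ∀ x, (fun j => μ j x) = fun j => μ j (Q x) := fun x => funext fun j => hμQ j x
  have hIcont : ∀ f, Measurable f → (∀ x, |f x| ≤ R) → ∀ (ρ : Measure (∀ j, A j))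
      [IsProbabilityMeasure ρ], Continuous fun x => ∫ b, G f x b ∂ρ := by
    intro f hf hfR ρ _
    exact aux_cont_param (G f) (hGc f hf hfR) (C + R) (hGb f hfR) ρ
  have hIb : ∀ f, (∀ x, |f x| ≤ R) → ∀ (ρ : Measure (∀ j, A j))
      [IsProbabilityMeasure ρ], ∀ x, |∫ b, G f x b ∂ρ| ≤ C + R := by
    intro f hfR ρ _ x
    exact aux_abs_le _ _ _ (hGb f hfR x)
  -- integrals against the cell measure
  have hcellle : ∀ z ∈ S, ∀ (ρ : Measure (∀ j, A j)) [IsProbabilityMeasure ρ] (k : ℝ),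
      (∀ x', Q x' = z → ∫ b, G jd x' b ∂ρ ≤ k) →
      ∫ x, (∫ b, G jd x b ∂ρ) ∂(cellMeasure ν Q z) ≤ k := by
    intro z hz ρ _ k h
    have := hcell z hz
    have := aux_le (cellMeasure ν Q z) (fun x => ∫ b, G jd x b ∂ρ) (fun _ => 0)
      (aux_integrable _ _ (hIcont jd hjd hjdR ρ).measurable _ (hIb jd hjdR ρ))
      (integrable_const _) k (by
        filter_upwards [aux_cell_ae ν Q hQ_meas z] with x hx
        simpa using h x hx)
    simpa using this
  have hcellge : ∀ z ∈ S, ∀ (ρ : Measure (∀ j, A j)) [IsProbabilityMeasure ρ] (k : ℝ),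
      (∀ x', Q x' = z → k ≤ ∫ b, G jd x' b ∂ρ) →
      k ≤ ∫ x, (∫ b, G jd x b ∂ρ) ∂(cellMeasure ν Q z) := by
    intro z hz ρ _ k h
    have := hcell z hz
    have := aux_le (cellMeasure ν Q z) (fun _ => k) (fun x => ∫ b, G jd x b ∂ρ)
      (integrable_const _)
      (aux_integrable _ _ (hIcont jd hjd hjdR ρ).measurable _ (hIb jd hjdR ρ)) 0 (by
        filter_upwards [aux_cell_ae ν Q hQ_meas z] with x hx
        simpa using h x hx)
    simpa using this
  refine ⟨?_, ?_, ?_, ?_, ?_, ?_, ?_⟩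
  · have := aux_measurable_cell S Q hQ_meas hQ_mem
      (fun z x => ∫ b, G ji x b ∂(Measure.pi fun j => μ j z))
      (fun z _ => (hIcont ji hji hjiR _).measurable)
    convert this using 2 with x
    rw [eji, hpiX]
  · have := aux_measurable_cell S Q hQ_meas hQ_mem
      (fun z x => ⨅ a : A i, ∫ b, G js x b
        ∂(Measure.pi (Function.update (fun j => μ j z) i (Measure.dirac a))))
      (fun z _ => by
        apply UpperSemicontinuous.measurable
        refine upperSemicontinuous_ciInf (fun x => ?_) fun a =>
          (hIcont js hjs hjsR _).upperSemicontinuous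
        refine ⟨-(C + R), ?_⟩
        rintro _ ⟨a, rfl⟩
        exact (abs_le.1 (hIb js hjsR _ x)).1)
    convert this using 2 with x
    rw [ejs, hpiX]
  · intro x
    rw [hjdQ', ejd' _ (hQ_mem x)]
    have := hcell _ (hQ_mem x)
    exact aux_abs_le _ _ _ (hIb jd hjdR _)
  · intro x
    rw [ejs, abs_le]
    have hb : ∀ a, -(C + R) ≤ ∫ b, G js x b
        ∂(Measure.pi (Function.update (fun j => μ j x) i (Measure.dirac a))) :=
      fun a => (abs_le.1 (hIb js hjsR _ x)).1
    constructor
    · exact le_ciInf hb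
    · exact (ciInf_le ⟨-(C + R), by rintro _ ⟨a, rfl⟩; exact hb a⟩ (Classical.arbitrary (A i))).trans
        (abs_le.1 (hIb js hjsR _ x)).2
  · intro x
    rw [eji]
    exact hIb ji hjiR _ x
  · intro x
    rw [hjdQ', ejd' _ (hQ_mem x), eji, hpiX, ← sub_le_iff_le_add]
    refine hcellge _ (hQ_mem x) _ _ fun x' hx' => ?_
    rw [sub_le_iff_le_add]
    refine aux_le _ _ _ (aux_integrable _ _ (hGm ji hji hjiR x) _ (hGb ji hjiR x))
      (aux_integrable _ _ (hGm jd hjd hjdR x') _ (hGb jd hjdR x')) _ (Eventually.of_forall fun b => ?_)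
    have h1 := hGle ji jd e₁ hji hjiR hjd hjdR h₁ x b
    have h2 := (abs_le.1 (hosc x x' b b (by simpa using hcd x x' hx'))).2
    linarith
  · intro x
    rw [← sub_le_iff_le_add, ejs]
    refine le_ciInf fun a => ?_
    obtain ⟨a', ha', hd⟩ := hAd_net a
    rw [sub_le_iff_le_add, hjdQ', ejd _ (hQ_mem x), hpiX x]
    refine (csInf_le ?_ (by exact ⟨a', ha', rfl⟩)).trans ?_
    · refine ⟨-(C + R), ?_⟩
      rintro _ ⟨a, _, rfl⟩
      have := hcell _ (hQ_mem x)
      exact (abs_le.1 (aux_abs_le _ _ _ (hIb jd hjdR _))).1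
    refine hcellle _ (hQ_mem x) _ _ fun x' hx' => ?_
    have hum : ∀ a : A i, Measurable (fun b : ∀ j, A j => Function.update b i a) := by
      intro a; fun_prop
    rw [aux_pi_update, aux_pi_update,
      integral_map (hum a').aemeasurable (hGm jd hjd hjdR x').aestronglyMeasurable,
      integral_map (hum a).aemeasurable (hGm js hjs hjsR x).aestronglyMeasurable]
    refine aux_le (Measure.pi fun j => μ j (Q x))
      (fun b => G jd x' (Function.update b i a')) (fun b => G js x (Function.update b i a))
      (aux_integrable _ _ ((hGm jd hjd hjdR x').comp (hum a')) _ fun b => hGb jd hjdR x' _)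
      (aux_integrable _ _ ((hGm js hjs hjsR x).comp (hum a)) _ fun b => hGb js hjsR x _)
      _ (Eventually.of_forall fun b => ?_)
    have h1 := hGle jd js e₂ hjd hjdR hjs hjsR h₂ x (Function.update b i a)
    have h2 := (abs_le.1 (hosc x x' (Function.update b i a) (Function.update b i a)
      (by simpa using hcd x x' hx'))).1
    have hdd : dist (Function.update b i a) (Function.update b i a') ≤ δ := by
      rw [dist_pi_le_iff hδ.le]
      intro j
      by_cases h : j = i
      · subst h; simpa using hd
      · simp [h, hδ.le]
    have h3 := (abs_le.1 (hosc x' x' (Function.update b i a) (Function.update b i a')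
      (by rw [dist_self]; linarith))).1
    linarith

/-- Finite-horizon nonzero-sum Markov games: for every `ε > 0` there is `δ(ε) > 0` such that
for all `0 < δ ≤ δ(ε)`, any Markov perfect Nash equilibrium of the finite `δ`-model,
extended to `X` via the quantizer, is a Markov perfect `ε`-Nash equilibrium of the
original game. -/
theorem finite_horizon_eps_nash
    -- compact metric state space
    (X : Type*) [MetricSpace X] [CompactSpace X] [Nonempty X]
    [MeasurableSpace X] [BorelSpace X]
    -- compact metric action spaces of the N players
    (N : ℕ) (A : Fin N → Type*) [∀ i, MetricSpace (A i)] [∀ i, CompactSpace (A i)]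
    [∀ i, Nonempty (A i)] [∀ i, MeasurableSpace (A i)] [∀ i, BorelSpace (A i)]
    -- bounded continuous one-stage cost functions
    (c : Fin N → X → (∀ i, A i) → ℝ)
    (hc : ∀ i, Continuous fun q : X × (∀ i, A i) => c i q.1 q.2)
    -- setwise continuous Borel stochastic kernel
    (p : X → (∀ i, A i) → Measure X)
    (hp_prob : ∀ x a, IsProbabilityMeasure (p x a))
    (hp_meas : ∀ D : Set X, MeasurableSet D →
      Measurable fun q : X × (∀ i, A i) => p q.1 q.2 D)
    (hp_setwise : ∀ D : Set X, MeasurableSet D →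
      Continuous fun q : X × (∀ i, A i) => (p q.1 q.2 D).toReal)
    -- finite horizon
    (T : ℕ)
    -- quantization data: finite δ-nets, nearest-point quantizer, weighting measures
    (Xd : ℝ → Finset X) (Q : ℝ → X → X) (Ad : ℝ → ∀ i, Finset (A i)) (ν : ℝ → Measure X)
    (hXd_net : ∀ δ > (0:ℝ), ∀ x : X, ∃ z ∈ Xd δ, dist x z ≤ δ)
    (hQ_mem : ∀ δ > (0:ℝ), ∀ x, Q δ x ∈ Xd δ)
    (hQ_near : ∀ δ > (0:ℝ), ∀ x, ∀ z ∈ Xd δ, dist x (Q δ x) ≤ dist x z)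
    (hQ_meas : ∀ δ > (0:ℝ), Measurable (Q δ))
    (hAd_net : ∀ δ > (0:ℝ), ∀ i, ∀ a : A i, ∃ b ∈ Ad δ i, dist a b ≤ δ)
    (hν_prob : ∀ δ > (0:ℝ), IsProbabilityMeasure (ν δ))
    (hν_pos : ∀ δ > (0:ℝ), ∀ z ∈ Xd δ, 0 < ν δ (Q δ ⁻¹' {z}))
    -- the quantization condition `lim_{δ→0} ω_δ(2δ) = 0`
    (hquant : Tendsto
      (fun δ : ℝ => sSup {v : ℝ | ∃ x y : X, ∃ a b : ∀ i, A i,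
        dist x y + dist a b ≤ 2 * δ ∧
        v = tvDist ((p x a).map (Q δ)) ((p y b).map (Q δ))})
      (𝓝[>] 0) (𝓝 0)) :
    -- conclusion: ε-Nash property of any finite-model Markov perfect equilibrium
    ∀ ε > (0:ℝ), ∃ δε > (0:ℝ), ∀ δ : ℝ, 0 < δ → δ ≤ δε →
      ∀ (π : (i : Fin N) → ℕ → X → Measure (A i))
        (Jd Js Ji : Fin N → ℕ → X → ℝ),
      -- π is an (extended) Markov policy profile of the finite δ-model
      (∀ i t, t < T → ∀ x, IsProbabilityMeasure (π i t x)) →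
      (∀ i t, t < T → ∀ x, π i t x (Ad δ i) = 1) →
      (∀ i t, t < T → ∀ x, π i t x = π i t (Q δ x)) →
      -- Jd is the (extended) finite-model best-response value, and π is a Markov perfect
      -- Nash equilibrium of the finite δ-model: the minimum in the backward recursion
      -- is attained by π at every state of the net
      (∀ i t, t ≤ T → ∀ x, Jd i t x = Jd i t (Q δ x)) →
      (∀ i x, Jd i T x = 0) →
      (∀ i t, t < T → ∀ z ∈ Xd δ,
        Jd i t z = sInf {v : ℝ | ∃ a ∈ Ad δ i, v =
          ∫ x, (∫ b, (c i x b + ∫ y, Jd i (t+1) y ∂(p x b))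
              ∂(Measure.pi (Function.update (fun j => π j t z) i (Measure.dirac a))))
            ∂(cellMeasure (ν δ) (Q δ) z)}) →
      (∀ i t, t < T → ∀ z ∈ Xd δ,
        Jd i t z =
          ∫ x, (∫ b, (c i x b + ∫ y, Jd i (t+1) y ∂(p x b))
              ∂(Measure.pi fun j => π j t z))
            ∂(cellMeasure (ν δ) (Q δ) z)) →
      -- Js is the original-model best-response value against the extended policies
      (∀ i x, Js i T x = 0) →
      (∀ i t, t < T → ∀ x : X,
        Js i t x = ⨅ a : A i,
          ∫ b, (c i x b + ∫ y, Js i (t+1) y ∂(p x b))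
            ∂(Measure.pi (Function.update (fun j => π j t x) i (Measure.dirac a)))) →
      -- Ji is the cost-to-go of player i under the extended joint policy
      (∀ i x, Ji i T x = 0) →
      (∀ i t, t < T → ∀ x : X,
        Ji i t x =
          ∫ b, (c i x b + ∫ y, Ji i (t+1) y ∂(p x b))
            ∂(Measure.pi fun j => π j t x)) →
      -- ε-Nash property at time 0
      ∀ i : Fin N, ∀ x : X, Ji i 0 x ≤ Js i 0 x + ε := by
  intro ε hε
  -- uniform bound on the costs
  have hcv : Continuous fun q : X × (∀ i, A i) => fun i => c i q.1 q.2 :=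
    continuous_pi hc
  obtain ⟨C, hC0, hC⟩ : ∃ C : ℝ, 0 ≤ C ∧ ∀ i x b, |c i x b| ≤ C := by
    obtain ⟨C, hC⟩ := (isCompact_univ.image hcv).isBounded.exists_norm_le
    refine ⟨max C 0, le_max_right _ _, fun i x b => ?_⟩
    have h1 := hC _ ⟨(x, b), Set.mem_univ _, rfl⟩
    exact ((norm_le_pi_norm (fun i => c i x b) i).trans h1).trans (le_max_left _ _)
  obtain ⟨η, hη, hηT⟩ : ∃ η : ℝ, 0 < η ∧ (T:ℝ) * (3 * η) ≤ ε := by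
    refine ⟨ε / (3 * ((T:ℝ) + 1)), by positivity, ?_⟩
    have : (T:ℝ) * (3 * (ε / (3 * ((T:ℝ) + 1)))) = ε * ((T:ℝ) / ((T:ℝ) + 1)) := by
      field_simp
    rw [this]
    have h1 : (T:ℝ) / ((T:ℝ) + 1) ≤ 1 := by
      rw [div_le_one (by positivity)]; linarith
    nlinarith
  obtain ⟨M, hM0, hM⟩ : ∃ M : ℝ, 0 ≤ M ∧ M = T * C := ⟨_, by positivity, rfl⟩
  have hcu := CompactSpace.uniformContinuous_of_continuous hcv
  obtain ⟨δ₁, hδ₁, hcu⟩ := Metric.uniformContinuous_iff.1 hcu (η / 2) (by positivity)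
  have hq := hquant.eventually (gt_mem_nhds (show (0:ℝ) < η / (2 * (M + 1)) by positivity))
  rw [eventually_nhdsWithin_iff, Metric.eventually_nhds_iff] at hq
  obtain ⟨δ₂, hδ₂, hq⟩ := hq
  refine ⟨min (δ₁ / 4) (δ₂ / 2), by positivity, ?_⟩
  intro δ hδ hδle π Jd Js Ji hπ hπAd hπQ hJdQ hJdT hJd hJd' hJsT hJs hJiT hJi i
  have hδ1 : δ ≤ δ₁ / 4 := hδle.trans (min_le_left _ _)
  have hδ2 : δ ≤ δ₂ / 2 := hδle.trans (min_le_right _ _)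
  have hq := hq (y := δ) (by rw [Real.dist_eq, sub_zero, abs_of_pos hδ]; linarith) hδ
  have htv : ∀ x y a b, dist x y + dist a b ≤ 2 * δ →
      tvDist ((p x a).map (Q δ)) ((p y b).map (Q δ)) ≤ η / (2 * (M + 1)) := by
    intro x y a b h
    refine (le_csSup ?_ ?_).trans hq.le
    · refine ⟨2, ?_⟩
      rintro _ ⟨x, y, a, b, _, rfl⟩
      have := Measure.isProbabilityMeasure_map (μ := p x a) (hQ_meas δ hδ).aemeasurable
      have := Measure.isProbabilityMeasure_map (μ := p y b) (hQ_meas δ hδ).aemeasurable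
      exact aux_tv_le _ _
    · exact ⟨x, y, a, b, h, rfl⟩
  have hosc : ∀ f : X → ℝ, (∀ x, |f x| ≤ M) → (∀ x, f x = f (Q δ x)) →
      ∀ x x' b b', dist x x' + dist b b' ≤ 2 * δ →
      |(c i x b + ∫ y, f y ∂(p x b)) - (c i x' b' + ∫ y, f y ∂(p x' b'))| ≤ η := by
    intro f hfM hfQ x x' b b' h
    have h1 : |c i x b - c i x' b'| ≤ η / 2 := by
      have hd : dist (x, b) (x', b') < δ₁ := by
        rw [Prod.dist_eq, max_lt_iff]
        have := dist_nonneg (x := x) (y := x')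
        have := dist_nonneg (x := b) (y := b')
        constructor <;> simp only <;> linarith
      have := (dist_le_pi_dist (fun i => c i x b) (fun i => c i x' b') i).trans (hcu hd).le
      rwa [Real.dist_eq] at this
    have h2 := aux_tv (Xd δ) (Q δ) (hQ_meas δ hδ) (hQ_mem δ hδ) f M hfM (p x b) (p x' b')
    simp only [← hfQ] at h2
    have h3 : M * tvDist ((p x b).map (Q δ)) ((p x' b').map (Q δ)) ≤ η / 2 := by
      refine (mul_le_mul_of_nonneg_left (htv _ _ _ _ h) hM0).trans ?_
      have : M * (η / (2 * (M + 1))) = (η / 2) * (M / (M + 1)) := by field_simp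
      rw [this]
      have h1 : M / (M + 1) ≤ 1 := by
        rw [div_le_one (by positivity)]; linarith
      nlinarith
    rw [abs_le] at *
    constructor <;> linarith [h1.1, h1.2, h2.1, h2.2]
  have := hν_prob δ hδ
  have main : ∀ s t : ℕ, t + s = T →
      Measurable (Ji i t) ∧ Measurable (Js i t) ∧ (∀ x, |Jd i t x| ≤ s * C) ∧
      (∀ x, |Js i t x| ≤ s * C) ∧ (∀ x, |Ji i t x| ≤ s * C) ∧
      (∀ x, Ji i t x ≤ Jd i t x + s * η) ∧ (∀ x, Jd i t x ≤ Js i t x + s * (2 * η)) := by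
    intro s
    induction s with
    | zero =>
      intro t ht
      obtain rfl : t = T := by omega
      have e1 : Ji i t = fun _ => 0 := funext (hJiT i)
      have e2 : Js i t = fun _ => 0 := funext (hJsT i)
      have e3 : Jd i t = fun _ => 0 := funext (hJdT i)
      rw [e1, e2, e3]
      simp
    | succ s ih =>
      intro t ht
      have htT : t < T := by omega
      obtain ⟨m1, m2, b1, b2, b3, k1, k2⟩ := ih (t + 1) (by omega)
      have hsM : (s:ℝ) * C ≤ M := by
        rw [hM]
        have : (s:ℝ) ≤ T := by exact_mod_cast (by omega : s ≤ T)
        exact mul_le_mul_of_nonneg_right this hC0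
      have := aux_step (c i) (hc i) C (hC i) p hp_prob hp_setwise (Xd δ) (Q δ) i (Ad δ i) (ν δ) δ
        (hQ_mem δ hδ) (hQ_meas δ hδ)
        (fun x => by
          obtain ⟨z, hz, hd⟩ := hXd_net δ hδ x
          exact (hQ_near δ hδ x z hz).trans hd)
        (hAd_net δ hδ i) (hν_pos δ hδ) (fun j x => π j t x) (fun j x => hπ j t htT x)
        (fun j x => hπQ j t htT x) (Jd i (t+1)) (Js i (t+1)) (Ji i (t+1)) (Jd i t) (Js i t) (Ji i t)
        (s * C) η (s * η) (s * (2 * η)) hδ m1 m2 b1 b2 b3 (hJdQ i (t+1) htT) (hJdQ i t htT.le)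
        (hosc _ (fun x => (b1 x).trans hsM) (hJdQ i (t+1) htT)) k1 k2
        (hJd i t htT) (hJd' i t htT) (hJs i t htT) (hJi i t htT)
      have r1 : ((s + 1 : ℕ) : ℝ) * C = C + s * C := by push_cast; ring
      have r2 : ((s + 1 : ℕ) : ℝ) * η = s * η + η := by push_cast; ring
      have r3 : ((s + 1 : ℕ) : ℝ) * (2 * η) = s * (2 * η) + 2 * η := by push_cast; ring
      rw [r1, r2, r3]
      exact this
  intro x
  obtain ⟨-, -, -, -, -, k1, k2⟩ := main T 0 (by omega)
  have := k1 x
  have := k2 x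
  linarith

end
end

section
/- Under the compact nonzero-sum game setup with the quantization condition lim_{δ→0} ω_δ(2δ) = 0 and discount factor β ∈ (0,1), for each δ > 0 let π*_δ be a stationary perfect Nash equilibrium of the finite δ-model. Then for each player i = 1,…,N, sup_{x∈X} |J^i(π*_δ; x) − J*(π^{*,-i}_δ; x)| → 0 as δ → 0, where J^i(π*_δ;·) is the discounted cost of player i in the original model under the extended joint equilibrium policy and J*(π^{*,-i}_δ;·) is the original-model discounted best-response value against the extended policies of the other players. -/
open MeasureTheory Filter Topology

noncomputable section

/-- A function factoring through a finite-range measurable quantizer. -/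
lemma quant_integral {X ι : Type*} [MeasurableSpace X] [MeasurableSpace ι]
    [MeasurableSingletonClass ι] (S : Finset ι) (Q : X → ι) (hQ : Measurable Q)
    (hS : ∀ x, Q x ∈ S) (J : ι → ℝ) (μ : Measure X) [IsFiniteMeasure μ] :
    Measurable (fun x => J (Q x)) ∧
    ∫ x, J (Q x) ∂μ = ∑ z ∈ S, μ.real (Q ⁻¹' {z}) * J z := by
  classical
  have h : (fun x => J (Q x)) =
      fun x => ∑ z ∈ S, (Q ⁻¹' {z}).indicator (fun _ => J z) x := by
    funext x
    rw [Finset.sum_eq_single (Q x)]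
    · simp
    · intro b _ hb
      rw [Set.indicator_of_notMem]
      simpa using fun h => hb h.symm
    · intro h; exact absurd (hS x) h
  have hm : ∀ z, MeasurableSet (Q ⁻¹' {z}) := fun z => hQ (measurableSet_singleton z)
  rw [h]
  refine ⟨Finset.measurable_fun_sum _ fun z _ => measurable_const.indicator (hm z), ?_⟩
  rw [integral_finsetSum]
  · refine Finset.sum_congr rfl fun z _ => ?_
    rw [integral_indicator_const _ (hm z)]; rfl
  · intro z _
    exact (integrable_const _).indicator (hm z)

lemma tvDist_ge {α : Type*} [MeasurableSpace α] (μ ν : Measure α) [IsProbabilityMeasure μ]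
    [IsProbabilityMeasure ν] (D : Set α) (hD : MeasurableSet D) :
    2 * |μ.real D - ν.real D| ≤ tvDist μ ν := by
  unfold tvDist
  have : BddAbove (Set.range fun D : {D : Set α // MeasurableSet D} =>
      |(μ D.1).toReal - (ν D.1).toReal|) := by
    refine ⟨1, ?_⟩
    rintro _ ⟨D, rfl⟩
    have h1 : μ.real D.1 ≤ 1 := measureReal_le_one
    have h2 : ν.real D.1 ≤ 1 := measureReal_le_one
    have h3 : 0 ≤ μ.real D.1 := measureReal_nonneg
    have h4 : 0 ≤ ν.real D.1 := measureReal_nonneg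
    change |μ.real D.1 - ν.real D.1| ≤ 1
    rw [abs_le]; constructor <;> linarith
  have := le_ciSup this ⟨D, hD⟩
  simp only [measureReal_def]
  linarith

lemma tvDist_le_two {α : Type*} [MeasurableSpace α] (μ ν : Measure α) [IsProbabilityMeasure μ]
    [IsProbabilityMeasure ν] : tvDist μ ν ≤ 2 := by
  unfold tvDist
  have : ⨆ D : {D : Set α // MeasurableSet D},
      |(μ D.1).toReal - (ν D.1).toReal| ≤ 1 := by
    have : Nonempty {D : Set α // MeasurableSet D} := ⟨⟨∅, MeasurableSet.empty⟩⟩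
    refine ciSup_le fun D => ?_
    have h1 : μ.real D.1 ≤ 1 := measureReal_le_one
    have h2 : ν.real D.1 ≤ 1 := measureReal_le_one
    have h3 : 0 ≤ μ.real D.1 := measureReal_nonneg
    have h4 : 0 ≤ ν.real D.1 := measureReal_nonneg
    change |μ.real D.1 - ν.real D.1| ≤ 1
    rw [abs_le]; constructor <;> linarith
  linarith

lemma tv_integral {X : Type*} [MeasurableSpace X]
    [MeasurableSingletonClass X] (S : Finset X) (Q : X → X) (hQ : Measurable Q)
    (hS : ∀ x, Q x ∈ S) (J : X → ℝ) (M : ℝ) (hM : ∀ x, |J x| ≤ M)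
    (μ ν : Measure X) [IsProbabilityMeasure μ] [IsProbabilityMeasure ν] :
    |∫ x, J (Q x) ∂μ - ∫ x, J (Q x) ∂ν| ≤ M * tvDist (μ.map Q) (ν.map Q) := by
  classical
  rw [(quant_integral S Q hQ hS J μ).2, (quant_integral S Q hQ hS J ν).2, ← Finset.sum_sub_distrib]
  have := Measure.isProbabilityMeasure_map (μ := μ) hQ.aemeasurable
  have := Measure.isProbabilityMeasure_map (μ := ν) hQ.aemeasurable
  set d : X → ℝ := fun z => (μ.map Q).real {z} - (ν.map Q).real {z} with hd
  have e : ∀ z, μ.real (Q ⁻¹' {z}) * J z - ν.real (Q ⁻¹' {z}) * J z = d z * J z := by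
    intro z
    simp only [hd, measureReal_def, Measure.map_apply hQ (measurableSet_singleton z)]
    ring
  simp only [e]
  have hset : ∀ T : Finset X, 2 * |∑ z ∈ T, d z| ≤ tvDist (μ.map Q) (ν.map Q) := by
    intro T
    have := tvDist_ge (μ.map Q) (ν.map Q) (T : Set X) T.measurableSet
    rw [← sum_measureReal_singleton, ← sum_measureReal_singleton, ← Finset.sum_sub_distrib] at this
    exact this
  have hM0 : ∀ x : X, 0 ≤ M := fun x => (abs_nonneg _).trans (hM x)
  have habs : ∑ z ∈ S, |d z| ≤ tvDist (μ.map Q) (ν.map Q) := by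
    rw [← Finset.sum_filter_add_sum_filter_not S (fun z => 0 ≤ d z)]
    have h1 : ∑ z ∈ S with 0 ≤ d z, |d z| = ∑ z ∈ S with 0 ≤ d z, d z :=
      Finset.sum_congr rfl fun z hz => abs_of_nonneg (Finset.mem_filter.1 hz).2
    have h2 : ∑ z ∈ S with ¬ 0 ≤ d z, |d z| = - ∑ z ∈ S with ¬ 0 ≤ d z, d z := by
      rw [← Finset.sum_neg_distrib]
      exact Finset.sum_congr rfl fun z hz => abs_of_neg (not_le.1 (Finset.mem_filter.1 hz).2)
    rw [h1, h2]
    have h3 := hset {z ∈ S | 0 ≤ d z}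
    have h4 := hset {z ∈ S | ¬ 0 ≤ d z}
    have h5 := le_abs_self (∑ z ∈ S with 0 ≤ d z, d z)
    have h6 := neg_le_abs (∑ z ∈ S with ¬ 0 ≤ d z, d z)
    linarith
  calc |∑ z ∈ S, d z * J z| ≤ ∑ z ∈ S, |d z * J z| := Finset.abs_sum_le_sum_abs _ _
    _ ≤ ∑ z ∈ S, M * |d z| := by
        refine Finset.sum_le_sum fun z _ => ?_
        rw [abs_mul, mul_comm]
        exact mul_le_mul_of_nonneg_right (hM z) (abs_nonneg _)
    _ = M * ∑ z ∈ S, |d z| := by rw [Finset.mul_sum]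
    _ ≤ _ := by
        obtain ⟨x⟩ : Nonempty X := (μ.nonempty_of_neZero)
        exact mul_le_mul_of_nonneg_left habs (hM0 x)

/-- Integrals of bounded measurable functions are continuous under setwise continuity. -/
lemma setwise_integral_cont {X Y : Type*} [MeasurableSpace X] [TopologicalSpace Y]
    (p : Y → Measure X) (hp : ∀ q, IsProbabilityMeasure (p q))
    (hs : ∀ D : Set X, MeasurableSet D → Continuous fun q => (p q D).toReal)
    (h : X → ℝ) (hh : Measurable h) (M : ℝ) (hM : ∀ x, |h x| ≤ M) :
    Continuous fun q => ∫ x, h x ∂(p q) := by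
  apply continuous_of_uniform_approx_of_continuous
  rw [Metric.uniformity_basis_dist_le.forall_iff (by
    intro s t hst H; obtain ⟨F, hF, h⟩ := H; exact ⟨F, hF, fun y => hst (h y)⟩)]
  intro ε hε
  let Q : X → ℤ := fun x => ⌊h x / ε⌋
  have hQ : Measurable Q := (hh.div_const ε).floor
  let S : Finset ℤ := Finset.Icc ⌊-M / ε⌋ ⌊M / ε⌋
  have hS : ∀ x, Q x ∈ S := by
    intro x
    have := abs_le.1 (hM x)
    refine Finset.mem_Icc.2 ⟨Int.floor_le_floor ?_, Int.floor_le_floor ?_⟩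
    · exact div_le_div_of_nonneg_right this.1 hε.le
    · exact div_le_div_of_nonneg_right this.2 hε.le
  have hq := fun q => quant_integral S Q hQ hS (fun z => (z : ℝ) * ε) (p q)
  refine ⟨fun q => ∫ x, ((Q x : ℤ) : ℝ) * ε ∂(p q), ?_, ?_⟩
  · have : (fun q => ∫ x, ((Q x : ℤ) : ℝ) * ε ∂(p q)) =
        fun q => ∑ z ∈ S, (p q).real (Q ⁻¹' {z}) * ((z : ℝ) * ε) := funext fun q => (hq q).2
    rw [this]
    refine continuous_finsetSum _ fun z _ => ?_
    exact (hs _ (hQ (measurableSet_singleton z))).mul continuous_const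
  · intro q
    have hb : ∀ x, |h x - (Q x : ℝ) * ε| ≤ ε := by
      intro x
      have h1 := Int.floor_le (h x / ε)
      have h2 := (Int.lt_floor_add_one (h x / ε)).le
      rw [le_div_iff₀ hε] at h1
      rw [div_le_iff₀ hε] at h2
      change |h x - (⌊h x / ε⌋ : ℝ) * ε| ≤ ε
      rw [abs_le]; constructor <;> nlinarith
    have i1 : Integrable h (p q) :=
      Integrable.of_bound hh.aestronglyMeasurable M (Eventually.of_forall hM)
    have i2 : Integrable (fun x => (Q x : ℝ) * ε) (p q) := by
      have : Integrable (fun x => h x - (Q x : ℝ) * ε) (p q) :=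
        Integrable.of_bound (hh.sub (hq q).1).aestronglyMeasurable ε (Eventually.of_forall hb)
      have := i1.sub this
      refine this.congr (Eventually.of_forall fun x => ?_)
      simp
    change dist _ _ ≤ ε
    rw [Real.dist_eq, ← integral_sub i1 i2]
    have := norm_integral_le_of_norm_le_const (μ := p q) (f := fun x => h x - (Q x : ℝ) * ε)
      (Eventually.of_forall hb)
    simpa using this

/-- Structure of `q ↦ ∫ J dp(q)` for an arbitrary bounded `J`. -/
lemma junk_structure {X Y : Type*} [MeasurableSpace X] [MetricSpace Y] [CompactSpace Y]
    (p : Y → Measure X) (hp : ∀ q, IsProbabilityMeasure (p q))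
    (hs : ∀ D : Set X, MeasurableSet D → Continuous fun q => (p q D).toReal)
    (J : X → ℝ) (M : ℝ) (hM : ∀ x, |J x| ≤ M) :
    ∃ (U : Set Y) (G : Y → ℝ), IsClosed U ∧ Continuous G ∧
      (∀ q ∈ U, ∫ x, J x ∂(p q) = G q) ∧ (∀ q ∉ U, ∫ x, J x ∂(p q) = 0) := by
  let U : Set Y := {q | AEStronglyMeasurable J (p q)}
  obtain ⟨t, htU, htc, hUt⟩ :=
    (TopologicalSpace.IsSeparable.of_separableSpace U).exists_countable_dense_subset
  have : Countable t := htc.to_subtype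
  let l : Measure X := Measure.sum fun q : t => p q
  have hJ : AEStronglyMeasurable J l :=
    aestronglyMeasurable_sum_measure_iff.2 fun q => htU q.2
  have hac : ∀ q ∈ closure t, p q ≪ l := by
    intro q hq
    refine Measure.AbsolutelyContinuous.mk fun D hD h0 => ?_
    have h1 : ∀ q ∈ t, (p q D).toReal = 0 := by
      intro q hq
      have : p q D = 0 := by
        refine le_antisymm (le_trans ?_ h0.le) zero_le
        exact Measure.le_sum (fun q : t => p q) ⟨q, hq⟩ D
      simp [this]
    have hcl : IsClosed {q | (p q D).toReal = 0} := isClosed_eq (hs D hD) continuous_const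
    have h2 : (p q D).toReal = 0 := closure_minimal h1 hcl hq
    exact ((ENNReal.toReal_eq_zero_iff _).1 h2).resolve_right (measure_ne_top _ _)
  have hcU : closure U ⊆ U := by
    intro q hq
    have : q ∈ closure t := closure_minimal hUt isClosed_closure hq
    exact hJ.mono_ac (hac q this)
  let h : X → ℝ := fun x => max (-M) (min M (hJ.mk J x))
  have hh : Measurable h :=
    measurable_const.max (measurable_const.min hJ.stronglyMeasurable_mk.measurable)
  have hJh : J =ᵐ[l] h := by
    filter_upwards [hJ.ae_eq_mk] with x hx
    have := abs_le.1 (hM x)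
    simp only [h, ← hx]
    rw [min_eq_right this.2, max_eq_right this.1]
  refine ⟨U, fun q => ∫ x, h x ∂(p q), isClosed_of_closure_subset hcU, ?_, ?_, ?_⟩
  · refine setwise_integral_cont p hp hs h hh |M| fun x => ?_
    have h1 : -M ≤ h x := le_max_left _ _
    have h0 : -|M| ≤ M := neg_abs_le M
    have h2 : h x ≤ |M| := max_le (neg_le_abs M) ((min_le_left _ _).trans (le_abs_self M))
    exact abs_le.2 ⟨(neg_le_neg (le_abs_self M)).trans h1, h2⟩
  · intro q hq
    exact integral_congr_ae ((hac q (hUt hq)).ae_eq hJh)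
  · intro q hq
    exact integral_non_aestronglyMeasurable hq

/-- Superlevel sets are `Gδ`. -/
def UGd {Y : Type*} [TopologicalSpace Y] (f : Y → ℝ) : Prop := ∀ t : ℝ, IsGδ {y | t ≤ f y}

lemma UGd.add {Y : Type*} [TopologicalSpace Y] {f g : Y → ℝ} (hf : UGd f) (hg : UGd g) :
    UGd fun y => f y + g y := by
  intro t
  have : {y | t ≤ f y + g y} = ⋂ r : ℚ, ({y | (r : ℝ) ≤ f y} ∪ {y | t - r ≤ g y}) := by
    ext y
    simp only [Set.mem_ofPred_eq, Set.mem_iInter, Set.mem_union]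
    constructor
    · intro h r
      by_contra! h'
      linarith [h'.1, h'.2]
    · intro h
      by_contra! h'
      obtain ⟨r, h1, h2⟩ := exists_rat_btwn (show f y < t - g y by linarith)
      rcases h r with h3 | h3 <;> linarith
  rw [this]
  exact IsGδ.iInter fun r => (hf r).union (hg _)

lemma UGd.of_continuous {Y : Type*} [MetricSpace Y] {f : Y → ℝ} (hf : Continuous f) : UGd f :=
  fun _ => (isClosed_le continuous_const hf).isGδ

lemma UGd.smul {Y : Type*} [MetricSpace Y] {f : Y → ℝ} (hf : UGd f) (w : ℝ) (hw : 0 ≤ w) :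
    UGd fun y => w * f y := by
  rcases hw.eq_or_lt with rfl | hw
  · simpa using UGd.of_continuous (Y := Y) (f := fun _ => 0) continuous_const
  · intro t
    have : {y | t ≤ w * f y} = {y | t / w ≤ f y} := by
      ext y; simp only [Set.mem_ofPred_eq, div_le_iff₀ hw, mul_comm]
    rw [this]; exact hf _

lemma UGd.sum {Y ι : Type*} [MetricSpace Y] (S : Finset ι) {f : ι → Y → ℝ}
    (hf : ∀ i, UGd (f i)) : UGd fun y => ∑ i ∈ S, f i y := by
  classical
  induction S using Finset.induction_on with
  | empty => simpa using UGd.of_continuous (Y := Y) (f := fun _ => 0) continuous_const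
  | insert a s ha ih => simpa [Finset.sum_insert ha] using (hf a).add ih

lemma UGd.comp {Y Z : Type*} [MetricSpace Y] [MetricSpace Z] {f : Y → ℝ} (hf : UGd f)
    {φ : Z → Y} (hφ : Continuous φ) : UGd fun z => f (φ z) :=
  fun t => IsGδ.preimage (s := {y | t ≤ f y}) hφ (hf t)

lemma junk_UGd {X Y : Type*} [MeasurableSpace X] [MetricSpace Y] [CompactSpace Y]
    (p : Y → Measure X) (hp : ∀ q, IsProbabilityMeasure (p q))
    (hs : ∀ D : Set X, MeasurableSet D → Continuous fun q => (p q D).toReal)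
    (J : X → ℝ) (M : ℝ) (hM : ∀ x, |J x| ≤ M) : UGd fun q => ∫ x, J x ∂(p q) := by
  obtain ⟨U, G, hU, hG, h1, h2⟩ := junk_structure p hp hs J M hM
  intro t
  have : {q | t ≤ ∫ x, J x ∂(p q)} = (U ∩ {q | t ≤ G q}) ∪ (Uᶜ ∩ {_q | t ≤ 0}) := by
    ext q
    by_cases hq : q ∈ U
    · simp [hq, h1 q hq]
    · simp [hq, h2 q hq]
  rw [this]
  exact (hU.isGδ.inter (isClosed_le continuous_const hG).isGδ).union
    (hU.isOpen_compl.isGδ.inter (isClosed_le continuous_const continuous_const).isGδ)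

lemma UGd.measurable {Y : Type*} [MetricSpace Y] [MeasurableSpace Y] [BorelSpace Y] {f : Y → ℝ}
    (hf : UGd f) : Measurable f :=
  measurable_of_Ici fun t => (hf t).measurableSet

lemma UGd.inf_measurable {X A : Type*} [MetricSpace X] [CompactSpace X] [MeasurableSpace X]
    [BorelSpace X] [MetricSpace A] [CompactSpace A] [Nonempty A] {f : X × A → ℝ}
    (hf : UGd f) (M : ℝ) (hM : ∀ q, |f q| ≤ M) : Measurable fun x => ⨅ a, f (x, a) := by
  refine measurable_of_Iio fun t => ?_
  have : (fun x => ⨅ a, f (x, a)) ⁻¹' Set.Iio t = Prod.fst '' {q | f q < t} := by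
    ext x
    have hb : BddBelow (Set.range fun a => f (x, a)) :=
      ⟨-M, by rintro _ ⟨a, rfl⟩; exact (abs_le.1 (hM _)).1⟩
    simp only [Set.mem_preimage, Set.mem_Iio, ciInf_lt_iff hb]
    simp
  rw [this]
  obtain ⟨V, hV, hVe⟩ := (hf t).eq_iInter_nat
  have h2 : {q | f q < t} = ⋃ n, (V n)ᶜ := by
    rw [← Set.compl_iInter, ← hVe]; ext q; simp
  rw [h2, Set.image_iUnion]
  exact MeasurableSet.iUnion fun n =>
    (((hV n).isClosed_compl.isCompact).image continuous_fst).isClosed.measurableSet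

lemma piecewise_measurable {X : Type*} [MeasurableSpace X] [MeasurableSingletonClass X]
    (S : Finset X) (Q : X → X) (hQ : Measurable Q)
    (hS : ∀ x, Q x ∈ S) (F : X → X → ℝ) (hF : ∀ z, Measurable (F z)) :
    Measurable fun x => F (Q x) x := by
  intro B hB
  have : (fun x => F (Q x) x) ⁻¹' B = ⋃ z ∈ S, (Q ⁻¹' {z} ∩ F z ⁻¹' B) := by
    ext x
    simp only [Set.mem_preimage, Set.mem_iUnion, Set.mem_inter_iff, Set.mem_singleton_iff]
    constructor
    · intro h; exact ⟨_, hS x, rfl, h⟩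
    · rintro ⟨z, _, rfl, h⟩; exact h
  rw [this]
  exact S.measurableSet_biUnion fun z _ => (hQ (measurableSet_singleton z)).inter (hF z hB)

lemma finite_supp_integral {α : Type*} [MeasurableSpace α] [MeasurableSingletonClass α]
    (μ : Measure α) [IsProbabilityMeasure μ] (B : Finset α) (hB : μ B = 1) (f : α → ℝ) :
    Integrable f μ ∧ ∫ x, f x ∂μ = ∑ b ∈ B, μ.real {b} * f b := by
  have hae : ∀ᵐ x ∂μ, x ∈ (B : Set α) := (prob_compl_eq_zero_iff B.measurableSet).2 hB
  have hr : μ.restrict B = μ := Measure.restrict_eq_self_of_ae_mem hae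
  have hi : IntegrableOn f B μ := IntegrableOn.finset
  constructor
  · rw [IntegrableOn, hr] at hi; exact hi
  · conv_lhs => rw [← hr]
    rw [setIntegral_finset _ hi]; rfl

lemma pi_integral {N : ℕ} {A : Fin N → Type*} [∀ i, MeasurableSpace (A i)]
    [∀ i, MeasurableSingletonClass (A i)] (μ : ∀ i, Measure (A i))
    (hμ : ∀ i, IsProbabilityMeasure (μ i)) (B : ∀ i, Finset (A i)) (hB : ∀ i, μ i (B i) = 1)
    (f : (∀ i, A i) → ℝ) :
    ∫ b, f b ∂(Measure.pi μ) =
      ∑ b ∈ Fintype.piFinset B, (Measure.pi μ).real {b} * f b := by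
  refine (finite_supp_integral _ _ ?_ f).2
  rw [Fintype.coe_piFinset, Measure.pi_pi]
  simp [hB]

lemma pi_update_integral {N : ℕ} {A : Fin N → Type*} [∀ i, MeasurableSpace (A i)]
    [∀ i, MeasurableSingletonClass (A i)] (μ : ∀ i, Measure (A i))
    (hμ : ∀ i, IsProbabilityMeasure (μ i)) (B : ∀ i, Finset (A i)) (hB : ∀ i, μ i (B i) = 1)
    (i : Fin N) (a : A i) (f : (∀ i, A i) → ℝ) :
    ∫ b, f b ∂(Measure.pi (Function.update μ i (Measure.dirac a))) =
      ∑ b ∈ Fintype.piFinset B, (Measure.pi μ).real {b} * f (Function.update b i a) := by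
  have hm : Measurable fun b : (∀ i, A i) => Function.update b i a := by
    refine measurable_pi_iff.2 fun j => ?_
    by_cases h : j = i
    · subst h; simp
    · simpa [Function.update_of_ne h] using measurable_pi_apply j
  have hpr : ∀ j, IsProbabilityMeasure (Function.update μ i (Measure.dirac a) j) := by
    intro j
    by_cases h : j = i
    · subst h; simp only [Function.update_self]; infer_instance
    · simp only [Function.update_of_ne h]; infer_instance
  have hmap : (Measure.pi μ).map (fun b => Function.update b i a) =
      Measure.pi (Function.update μ i (Measure.dirac a)) := by
    let g : ∀ j, A j → A j := fun j => if h : j = i then fun _ => h ▸ a else id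
    have hg : ∀ j, Measurable (g j) := by
      intro j
      by_cases h : j = i
      · simp only [g, h, dite_true]; exact measurable_const
      · simp only [g, h, dite_false]; exact measurable_id
    have e1 : (fun b : (∀ i, A i) => Function.update b i a) = fun b j => g j (b j) := by
      funext b j
      by_cases h : j = i
      · subst h; simp [g]
      · simp [g, h]
    have e2 : Function.update μ i (Measure.dirac a) = fun j => (μ j).map (g j) := by
      funext j
      by_cases h : j = i
      · subst h; simp [g]
      · simp [g, h]
    rw [e2] at hpr
    rw [e1, e2]
    exact Measure.pi_map_pi fun j => (hg j).aemeasurable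
  have hB' : (Measure.pi μ) (Fintype.piFinset B) = 1 := by
    rw [Fintype.coe_piFinset, Measure.pi_pi]; simp [hB]
  let B' : ∀ j, Finset (A j) := Function.update B i {a}
  have hs : (Measure.pi (Function.update μ i (Measure.dirac a))) (Fintype.piFinset B') = 1 := by
    rw [Fintype.coe_piFinset, Measure.pi_pi]
    refine Finset.prod_eq_one fun j _ => ?_
    by_cases h : j = i
    · subst h; simp [B']
    · simp [B', h, hB]
  have hi := (finite_supp_integral _ _ hs f).1
  rw [← hmap] at hi ⊢
  rw [integral_map hm.aemeasurable hi.aestronglyMeasurable]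
  exact (finite_supp_integral _ _ hB' _).2

lemma contr_bound {X : Type*} [Nonempty X] (u : X → ℝ) (M : ℝ) (hM : ∀ x, |u x| ≤ M) (k β : ℝ)
    (hβ1 : β < 1) (h : ∀ s, (∀ x, |u x| ≤ s) → ∀ x, |u x| ≤ k + β * s) :
    ∀ x, |u x| ≤ k / (1 - β) := by
  have hb : BddAbove (Set.range fun x => |u x|) := ⟨M, by rintro _ ⟨x, rfl⟩; exact hM x⟩
  have h1 : ∀ x, |u x| ≤ ⨆ x, |u x| := fun x => le_ciSup hb x
  have h2 : ⨆ x, |u x| ≤ k + β * ⨆ x, |u x| := ciSup_le (h _ h1)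
  intro x
  rw [le_div_iff₀ (by linarith)]
  nlinarith [h1 x]

lemma wavg_bound {ι : Type*} (B : Finset ι) (w : ι → ℝ) (hw : ∀ b, 0 ≤ w b)
    (hw1 : ∑ b ∈ B, w b = 1) (f : ι → ℝ) (k : ℝ) (hf : ∀ b, |f b| ≤ k) :
    |∑ b ∈ B, w b * f b| ≤ k := by
  calc |∑ b ∈ B, w b * f b| ≤ ∑ b ∈ B, |w b * f b| := Finset.abs_sum_le_sum_abs _ _
    _ ≤ ∑ b ∈ B, w b * k := by
        refine Finset.sum_le_sum fun b _ => ?_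
        rw [abs_mul, abs_of_nonneg (hw b)]
        exact mul_le_mul_of_nonneg_left (hf b) (hw b)
    _ = k := by rw [← Finset.sum_mul, hw1, one_mul]

lemma wavg_diff {ι : Type*} (B : Finset ι) (w : ι → ℝ) (hw : ∀ b, 0 ≤ w b)
    (hw1 : ∑ b ∈ B, w b = 1) (f g : ι → ℝ) (k : ℝ) (hf : ∀ b, |f b - g b| ≤ k) :
    |∑ b ∈ B, w b * f b - ∑ b ∈ B, w b * g b| ≤ k := by
  rw [← Finset.sum_sub_distrib]
  simp only [← mul_sub]
  exact wavg_bound B w hw hw1 _ k hf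

lemma prob_int_bound {X : Type*} [MeasurableSpace X] (μ : Measure X) [IsProbabilityMeasure μ]
    (f : X → ℝ) (k : ℝ) (hf : ∀ᵐ x ∂μ, |f x| ≤ k) : |∫ x, f x ∂μ| ≤ k := by
  have := norm_integral_le_of_norm_le_const (μ := μ) (f := f) hf
  simpa using this

lemma prob_int_diff {X : Type*} [MeasurableSpace X] (μ : Measure X) [IsProbabilityMeasure μ]
    (f g : X → ℝ) (hf : Measurable f) (hg : Measurable g) (Mf Mg : ℝ) (hMf : ∀ x, |f x| ≤ Mf)
    (hMg : ∀ x, |g x| ≤ Mg) (k : ℝ) (h : ∀ x, |f x - g x| ≤ k) :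
    |∫ x, f x ∂μ - ∫ x, g x ∂μ| ≤ k := by
  rw [← integral_sub (Integrable.of_bound hf.aestronglyMeasurable Mf (Eventually.of_forall hMf))
    (Integrable.of_bound hg.aestronglyMeasurable Mg (Eventually.of_forall hMg))]
  exact prob_int_bound μ _ k (Eventually.of_forall h)

lemma avg_near {X : Type*} [MeasurableSpace X] [TopologicalSpace X] [CompactSpace X] [BorelSpace X]
    (μ : Measure X) [IsProbabilityMeasure μ]
    (f : X → ℝ) (hf : Continuous f) (x₀ : X) (k : ℝ) (h : ∀ᵐ x ∂μ, |f x₀ - f x| ≤ k) :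
    |f x₀ - ∫ x, f x ∂μ| ≤ k := by
  have hi : Integrable f μ := by
    obtain ⟨M, hM⟩ := isCompact_univ.exists_bound_of_continuousOn hf.continuousOn
    exact Integrable.of_bound hf.measurable.aestronglyMeasurable M
      (Eventually.of_forall fun x => hM x (Set.mem_univ _))
  have e : f x₀ - ∫ x, f x ∂μ = ∫ x, (f x₀ - f x) ∂μ := by
    rw [integral_sub (integrable_const _) hi]; simp
  rw [e]
  exact prob_int_bound μ _ k h

/-- Fixed-`δ`, fixed-player estimate. -/
lemma core_estimate
    {X : Type*} [MetricSpace X] [CompactSpace X] [Nonempty X] [MeasurableSpace X] [BorelSpace X]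
    {N : ℕ} {A : Fin N → Type*} [∀ i, MetricSpace (A i)] [∀ i, CompactSpace (A i)]
    [∀ i, Nonempty (A i)] (i : Fin N)
    (c : X → (∀ i, A i) → ℝ) (hc : Continuous fun q : X × (∀ i, A i) => c q.1 q.2)
    (C : ℝ) (hC : ∀ x b, |c x b| ≤ C)
    (p : X → (∀ i, A i) → Measure X) (hp : ∀ x a, IsProbabilityMeasure (p x a))
    (hs : ∀ D : Set X, MeasurableSet D →
      Continuous fun q : X × (∀ i, A i) => (p q.1 q.2 D).toReal)
    (β : ℝ) (hβ0 : 0 < β) (hβ1 : β < 1) (δ : ℝ)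
    (S : Finset X) (Q : X → X) (hQ : Measurable Q) (hS : ∀ x, Q x ∈ S)
    (hQd : ∀ x y, Q x = Q y → dist x y ≤ 2 * δ)
    (Ad : Finset (A i)) (hAd : ∀ a, ∃ b ∈ Ad, dist a b ≤ δ) (hδ : 0 < δ)
    (m : X → Measure X) (hm : ∀ z ∈ S, IsProbabilityMeasure (m z))
    (hmQ : ∀ z ∈ S, ∀ᵐ x ∂(m z), Q x = z)
    (B : Finset (∀ i, A i)) (w : X → (∀ i, A i) → ℝ) (hw : ∀ z b, 0 ≤ w z b)
    (hw1 : ∀ z, ∑ b ∈ B, w z b = 1)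
    (e ω : ℝ) (hce : ∀ x y a b, dist x y + dist a b ≤ 2 * δ → |c x a - c y b| ≤ e)
    (hω : ∀ x y a b, dist x y + dist a b ≤ 2 * δ →
      tvDist ((p x a).map Q) ((p y b).map Q) ≤ ω)
    (Jd : X → ℝ) (hJd : ∀ x, Jd x = Jd (Q x))
    (hrec : ∀ z ∈ S, Jd z = sInf {v : ℝ | ∃ a ∈ Ad, v = ∫ x, (∑ b ∈ B, w z b *
      (c x (Function.update b i a) + β * ∫ y, Jd y ∂(p x (Function.update b i a)))) ∂(m z)})
    (hatt : ∀ z ∈ S, Jd z = ∫ x, (∑ b ∈ B, w z b *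
      (c x b + β * ∫ y, Jd y ∂(p x b))) ∂(m z))
    (Js : X → ℝ) (Ms : ℝ) (hMs : ∀ x, |Js x| ≤ Ms)
    (hJs : ∀ x, Js x = ⨅ a : A i, ∑ b ∈ B, w (Q x) b *
      (c x (Function.update b i a) + β * ∫ y, Js y ∂(p x (Function.update b i a))))
    (Ji : X → ℝ) (Mi : ℝ) (hMi : ∀ x, |Ji x| ≤ Mi)
    (hJi : ∀ x, Ji x = ∑ b ∈ B, w (Q x) b * (c x b + β * ∫ y, Ji y ∂(p x b))) :
    ∀ x, |Ji x - Js x| ≤ 3 * (e + β * (C / (1 - β) * ω)) / (1 - β) := by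
  classical
  -- uniform kernel
  have hpq : ∀ q : X × (∀ i, A i), IsProbabilityMeasure (p q.1 q.2) := fun q => hp _ _
  have hupd : Continuous fun r : X × A i × (∀ i, A i) =>
      (r.1, Function.update r.2.2 i r.2.1) := by fun_prop
  have hupd' : ∀ b : (∀ i, A i), Continuous fun r : X × A i => (r.1, Function.update b i r.2) := by
    intro b; fun_prop
  -- measurability
  have hUs := junk_UGd (fun q : X × (∀ i, A i) => p q.1 q.2) hpq hs Js Ms hMs
  have hUi := junk_UGd (fun q : X × (∀ i, A i) => p q.1 q.2) hpq hs Ji Mi hMi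
  have hbs : ∀ x b, |c x b + β * ∫ y, Js y ∂(p x b)| ≤ C + β * Ms := by
    intro x b
    have h1 := prob_int_bound (p x b) Js Ms (Eventually.of_forall hMs)
    calc _ ≤ |c x b| + |β * ∫ y, Js y ∂(p x b)| := abs_add_le _ _
      _ ≤ _ := by
        rw [abs_mul, abs_of_pos hβ0]
        exact add_le_add (hC x b) (mul_le_mul_of_nonneg_left h1 hβ0.le)
  have hJim : Measurable Ji := by
    have : Ji = fun x => (fun z x => ∑ b ∈ B, w z b * (c x b + β * ∫ y, Ji y ∂(p x b))) (Q x) x :=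
      funext hJi
    rw [this]
    refine piecewise_measurable S Q hQ hS
      (fun z x => ∑ b ∈ B, w z b * (c x b + β * ∫ y, Ji y ∂(p x b))) fun z => UGd.measurable ?_
    refine UGd.sum B fun b => ?_
    refine UGd.smul ?_ _ (hw z b)
    exact (((UGd.of_continuous hc).add (hUi.smul β hβ0.le)).comp
      (φ := fun x : X => (x, b)) (by fun_prop))
  have hJsm : Measurable Js := by
    have : Js = fun x => (fun z x => ⨅ a : A i, (fun r : X × A i => ∑ b ∈ B, w z b *
      (c r.1 (Function.update b i r.2) + β * ∫ y, Js y ∂(p r.1 (Function.update b i r.2))))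
        (x, a)) (Q x) x := funext hJs
    rw [this]
    refine piecewise_measurable S Q hQ hS (fun z x => ⨅ a : A i, (fun r : X × A i =>
      ∑ b ∈ B, w z b * (c r.1 (Function.update b i r.2) +
        β * ∫ y, Js y ∂(p r.1 (Function.update b i r.2)))) (x, a)) fun z => ?_
    refine UGd.inf_measurable (X := X) (A := A i) (f := fun r : X × A i =>
      ∑ b ∈ B, w z b * (c r.1 (Function.update b i r.2) +
        β * ∫ y, Js y ∂(p r.1 (Function.update b i r.2)))) ?_ (C + β * Ms) ?_
    · refine UGd.sum B fun b => ?_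
      refine UGd.smul ?_ _ (hw z b)
      exact (((UGd.of_continuous hc).add (hUs.smul β hβ0.le)).comp (hupd' b))
    · intro q
      exact wavg_bound B _ (hw z) (hw1 z) _ _ fun b => hbs _ _
  have hJdm : Measurable Jd := by
    have := (quant_integral S Q hQ hS Jd (0 : Measure X)).1
    rwa [← funext hJd] at this
  -- bound on Jd
  have hJdb0 : ∃ M, ∀ x, |Jd x| ≤ M := by
    refine ⟨∑ z ∈ S, |Jd z|, fun x => ?_⟩
    rw [hJd x]
    exact Finset.single_le_sum (f := fun z => |Jd z|) (fun _ _ => abs_nonneg _) (hS x)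
  obtain ⟨Md, hMd⟩ := hJdb0
  have hJdb : ∀ x, |Jd x| ≤ C / (1 - β) := by
    refine contr_bound Jd Md hMd C β hβ1 fun s hs' x => ?_
    rw [hJd x, hatt _ (hS x)]
    have := hm _ (hS x)
    refine prob_int_bound _ _ _ (Eventually.of_forall fun y => ?_)
    refine wavg_bound B _ (hw _) (hw1 _) _ _ fun b => ?_
    have h1 := prob_int_bound (p y b) Jd s (Eventually.of_forall hs')
    calc _ ≤ |c y b| + |β * ∫ y, Jd y ∂(p y b)| := abs_add_le _ _
      _ ≤ _ := by
        rw [abs_mul, abs_of_pos hβ0]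
        exact add_le_add (hC y b) (mul_le_mul_of_nonneg_left h1 hβ0.le)
  set M := C / (1 - β) with hMdef
  have hM0 : 0 ≤ M := (abs_nonneg _).trans (hJdb (Classical.arbitrary X))
  set ε := e + β * (M * ω) with hε
  -- H and its regularity
  let H : X → (∀ i, A i) → ℝ := fun x b => c x b + β * ∫ y, Jd y ∂(p x b)
  have hHc : Continuous fun q : X × (∀ i, A i) => H q.1 q.2 :=
    hc.add (continuous_const.mul
      (setwise_integral_cont (fun q : X × (∀ i, A i) => p q.1 q.2) hpq hs Jd hJdm M hJdb))
  have hHe : ∀ x y a b, dist x y + dist a b ≤ 2 * δ → |H x a - H y b| ≤ ε := by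
    intro x y a b hd
    have h1 := hce x y a b hd
    have h2 : |∫ y, Jd y ∂(p x a) - ∫ x, Jd x ∂(p y b)| ≤ M * ω := by
      have h3 := tv_integral S Q hQ hS Jd M hJdb (p x a) (p y b)
      rw [← funext hJd] at h3
      exact h3.trans (mul_le_mul_of_nonneg_left (hω x y a b hd) hM0)
    have : H x a - H y b = (c x a - c y b) +
        β * (∫ y, Jd y ∂(p x a) - ∫ x, Jd x ∂(p y b)) := by simp only [H]; ring
    rw [this]
    calc _ ≤ |c x a - c y b| + |β * (∫ y, Jd y ∂(p x a) - ∫ x, Jd x ∂(p y b))| := abs_add_le _ _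
      _ ≤ _ := by
        rw [abs_mul, abs_of_pos hβ0]
        exact add_le_add h1 (mul_le_mul_of_nonneg_left h2 hβ0.le)
  -- generic average estimate
  have havg : ∀ x, ∀ φ : (∀ i, A i) → (∀ i, A i),
      |∑ b ∈ B, w (Q x) b * H x (φ b) -
        ∫ x', (∑ b ∈ B, w (Q x) b * H x' (φ b)) ∂(m (Q x))| ≤ ε := by
    intro x φ
    have := hm _ (hS x)
    refine avg_near (m (Q x)) (fun x' => ∑ b ∈ B, w (Q x) b * H x' (φ b)) ?_ x ε ?_
    · refine continuous_finsetSum _ fun b _ => continuous_const.mul ?_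
      exact hHc.comp (by fun_prop : Continuous fun x' : X => (x', φ b))
    · filter_upwards [hmQ _ (hS x)] with x' hx'
      refine wavg_diff B _ (hw _) (hw1 _) _ _ _ fun b => hHe _ _ _ _ ?_
      rw [dist_self, add_zero]
      exact hQd _ _ hx'.symm
  -- generic replacement estimate
  have hrep : ∀ J : X → ℝ, Measurable J → ∀ MJ, (∀ x, |J x| ≤ MJ) → ∀ s, (∀ x, |J x - Jd x| ≤ s) →
      ∀ x b, |(c x b + β * ∫ y, J y ∂(p x b)) - H x b| ≤ β * s := by
    intro J hJ MJ hMJ s hs' x b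
    have h1 := prob_int_diff (p x b) J Jd hJ hJdm MJ M hMJ hJdb s hs'
    have : (c x b + β * ∫ y, J y ∂(p x b)) - H x b =
      β * (∫ y, J y ∂(p x b) - ∫ y, Jd y ∂(p x b)) := by simp only [H]; ring
    rw [this, abs_mul, abs_of_pos hβ0]
    exact mul_le_mul_of_nonneg_left h1 hβ0.le
  -- first claim
  have hA : ∀ x, |Ji x - Jd x| ≤ ε / (1 - β) := by
    refine contr_bound (fun x => Ji x - Jd x) (Mi + M)
      (fun x => (abs_sub _ _).trans (add_le_add (hMi x) (hJdb x))) ε β hβ1 fun s hs' x => ?_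
    have h1 := havg x id
    have h2 : |Ji x - ∑ b ∈ B, w (Q x) b * H x b| ≤ β * s := by
      rw [hJi x]
      exact wavg_diff B _ (hw _) (hw1 _) _ _ _ fun b => hrep Ji hJim Mi hMi s hs' x b
    have h3 := hatt _ (hS x)
    rw [← hJd x] at h3
    simp only [id] at h1
    change Jd x = ∫ x', (∑ b ∈ B, w (Q x) b * H x' b) ∂(m (Q x)) at h3
    rw [← h3] at h1
    change |Ji x - Jd x| ≤ _
    rw [abs_le] at h1 h2 ⊢
    constructor <;> linarith [h1.1, h1.2, h2.1, h2.2]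
  -- second claim
  have hBc : ∀ x, |Js x - Jd x| ≤ 2 * ε / (1 - β) := by
    refine contr_bound (fun x => Js x - Jd x) (Ms + M)
      (fun x => (abs_sub _ _).trans (add_le_add (hMs x) (hJdb x))) (2 * ε) β hβ1 fun s hs' x => ?_
    let F : A i → ℝ := fun a => ∑ b ∈ B, w (Q x) b *
      (c x (Function.update b i a) + β * ∫ y, Js y ∂(p x (Function.update b i a)))
    let K : A i → ℝ := fun a => ∫ x', (∑ b ∈ B, w (Q x) b * H x' (Function.update b i a)) ∂(m (Q x))
    have hF : Js x = ⨅ a, F a := hJs x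
    have hK : Jd x = sInf {v : ℝ | ∃ a ∈ Ad, v = K a} := by
      rw [hJd x]; exact hrec _ (hS x)
    have hFK : ∀ a a', dist a a' ≤ δ → |F a - K a'| ≤ 2 * ε + β * s := by
      intro a a' haa
      have h1 : |F a - ∑ b ∈ B, w (Q x) b * H x (Function.update b i a)| ≤ β * s :=
        wavg_diff B _ (hw _) (hw1 _) _ _ _ fun b => hrep Js hJsm Ms hMs s hs' x _
      have h2 : |∑ b ∈ B, w (Q x) b * H x (Function.update b i a) -
          ∑ b ∈ B, w (Q x) b * H x (Function.update b i a')| ≤ ε := by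
        refine wavg_diff B _ (hw _) (hw1 _) _ _ _ fun b => hHe _ _ _ _ ?_
        rw [dist_self, zero_add]
        refine (dist_pi_le_iff (by linarith)).2 fun j => ?_
        by_cases h : j = i
        · subst h; simp only [Function.update_self]; linarith
        · simp only [Function.update_of_ne h, dist_self]; linarith
      have h3 : |_ - K a'| ≤ ε := havg x (fun b => Function.update b i a')
      rw [abs_le] at h1 h2 h3 ⊢
      constructor <;> linarith [h1.1, h1.2, h2.1, h2.2, h3.1, h3.2]
    have hFb : BddBelow (Set.range F) := by
      refine ⟨-(C + β * Ms), ?_⟩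
      rintro _ ⟨a, rfl⟩
      exact (abs_le.1 (wavg_bound B _ (hw _) (hw1 _) _ _ fun b => hbs _ _)).1
    have hset : {v : ℝ | ∃ a ∈ Ad, v = K a} = K '' (Ad : Set (A i)) := by
      ext v; constructor
      · rintro ⟨a, ha, rfl⟩; exact ⟨a, ha, rfl⟩
      · rintro ⟨a, ha, rfl⟩; exact ⟨a, ha, rfl⟩
    have hKb : BddBelow {v : ℝ | ∃ a ∈ Ad, v = K a} := by
      rw [hset]; exact (Ad.finite_toSet.image K).bddBelow
    have hne : {v : ℝ | ∃ a ∈ Ad, v = K a}.Nonempty := by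
      obtain ⟨a, ha, _⟩ := hAd (Classical.arbitrary _)
      exact ⟨_, a, ha, rfl⟩
    have u1 : Js x - (2 * ε + β * s) ≤ Jd x := by
      rw [hK]
      refine le_csInf hne ?_
      rintro _ ⟨a, ha, rfl⟩
      have h1 := (abs_le.1 (hFK a a (by simpa using hδ.le))).2
      have h2 : Js x ≤ F a := hF ▸ ciInf_le hFb a
      linarith
    have u2 : Jd x - (2 * ε + β * s) ≤ Js x := by
      rw [hF]
      refine le_ciInf fun a => ?_
      obtain ⟨a', ha', hd⟩ := hAd a
      have h1 := (abs_le.1 (hFK a a' hd)).1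
      have h2 : Jd x ≤ K a' := hK ▸ csInf_le hKb ⟨a', ha', rfl⟩
      linarith
    rw [abs_le]; constructor <;> linarith
  intro x
  have h1 := hA x
  have h2 := hBc x
  have : 3 * ε / (1 - β) = ε / (1 - β) + 2 * ε / (1 - β) := by ring
  rw [this]
  rw [abs_le] at h1 h2 ⊢
  constructor <;> linarith [h1.1, h1.2, h2.1, h2.2]

/-- Discounted-cost approximation of nonzero-sum Markov games (Theorem 5.2 of the paper):
the discounted cost of each player under the extended finite-model stationary perfect
equilibrium converges uniformly to the original-model discounted best-response value
against the extended policies of the other players. -/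
theorem discounted_equilibrium_cost_approximation
    -- compact metric state space
    (X : Type*) [MetricSpace X] [CompactSpace X] [Nonempty X]
    [MeasurableSpace X] [BorelSpace X]
    -- compact metric action spaces of the N players
    (N : ℕ) (A : Fin N → Type*) [∀ i, MetricSpace (A i)] [∀ i, CompactSpace (A i)]
    [∀ i, Nonempty (A i)] [∀ i, MeasurableSpace (A i)] [∀ i, BorelSpace (A i)]
    -- bounded continuous one-stage cost functions
    (c : Fin N → X → (∀ i, A i) → ℝ)
    (hc : ∀ i, Continuous fun q : X × (∀ i, A i) => c i q.1 q.2)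
    -- setwise continuous Borel stochastic kernel
    (p : X → (∀ i, A i) → Measure X)
    (hp_prob : ∀ x a, IsProbabilityMeasure (p x a))
    (hp_meas : ∀ D : Set X, MeasurableSet D →
      Measurable fun q : X × (∀ i, A i) => p q.1 q.2 D)
    (hp_setwise : ∀ D : Set X, MeasurableSet D →
      Continuous fun q : X × (∀ i, A i) => (p q.1 q.2 D).toReal)
    -- discount factor
    (β : ℝ) (hβ0 : 0 < β) (hβ1 : β < 1)
    -- quantization data: finite δ-nets, nearest-point quantizer, weighting measures
    (Xd : ℝ → Finset X) (Q : ℝ → X → X) (Ad : ℝ → ∀ i, Finset (A i)) (ν : ℝ → Measure X)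
    (hXd_net : ∀ δ > (0:ℝ), ∀ x : X, ∃ z ∈ Xd δ, dist x z ≤ δ)
    (hQ_mem : ∀ δ > (0:ℝ), ∀ x, Q δ x ∈ Xd δ)
    (hQ_near : ∀ δ > (0:ℝ), ∀ x, ∀ z ∈ Xd δ, dist x (Q δ x) ≤ dist x z)
    (hQ_meas : ∀ δ > (0:ℝ), Measurable (Q δ))
    (hAd_net : ∀ δ > (0:ℝ), ∀ i, ∀ a : A i, ∃ b ∈ Ad δ i, dist a b ≤ δ)
    (hν_prob : ∀ δ > (0:ℝ), IsProbabilityMeasure (ν δ))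
    (hν_pos : ∀ δ > (0:ℝ), ∀ z ∈ Xd δ, 0 < ν δ (Q δ ⁻¹' {z}))
    -- the quantization condition `lim_{δ→0} ω_δ(2δ) = 0`
    (hquant : Tendsto
      (fun δ : ℝ => sSup {v : ℝ | ∃ x y : X, ∃ a b : ∀ i, A i,
        dist x y + dist a b ≤ 2 * δ ∧
        v = tvDist ((p x a).map (Q δ)) ((p y b).map (Q δ))})
      (𝓝[>] 0) (𝓝 0))
    -- (already extended) stationary policies of the finite δ-model: probability measures
    -- supported on the finite action nets, piecewise constant on quantization cells
    (π : ℝ → (i : Fin N) → X → Measure (A i))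
    (hπ_prob : ∀ δ > (0:ℝ), ∀ i x, IsProbabilityMeasure (π δ i x))
    (hπ_supp : ∀ δ > (0:ℝ), ∀ i x, π δ i x (Ad δ i) = 1)
    (hπ_const : ∀ δ > (0:ℝ), ∀ i x, π δ i x = π δ i (Q δ x))
    -- the extended finite-model best-response values Ĵ*_δ(π^{*,-i}_δ;·)
    (Jd : ℝ → Fin N → X → ℝ)
    (hJd_const : ∀ δ > (0:ℝ), ∀ i x, Jd δ i x = Jd δ i (Q δ x))
    -- fixed-point equation of the finite δ-model, per state of the net
    (hJd_rec : ∀ δ > (0:ℝ), ∀ i, ∀ z ∈ Xd δ,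
      Jd δ i z = sInf {v : ℝ | ∃ a ∈ Ad δ i, v =
        ∫ x, (∫ b, (c i x b + β * ∫ y, Jd δ i y ∂(p x b))
            ∂(Measure.pi (Function.update (fun j => π δ j z) i (Measure.dirac a))))
          ∂(cellMeasure (ν δ) (Q δ) z)})
    -- the minimum is attained by the equilibrium mixed action π^{*,i}_δ(z)
    (hJd_attain : ∀ δ > (0:ℝ), ∀ i, ∀ z ∈ Xd δ,
      Jd δ i z =
        ∫ x, (∫ b, (c i x b + β * ∫ y, Jd δ i y ∂(p x b))
            ∂(Measure.pi fun j => π δ j z))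
          ∂(cellMeasure (ν δ) (Q δ) z))
    -- J*(π^{*,-i}_δ;·): the unique bounded fixed point of the original-model
    -- best-response operator against the extended policies
    (Js : ℝ → Fin N → X → ℝ)
    (hJs_bdd : ∀ δ > (0:ℝ), ∀ i, ∃ M : ℝ, ∀ x, |Js δ i x| ≤ M)
    (hJs_fix : ∀ δ > (0:ℝ), ∀ i, ∀ x : X,
      Js δ i x = ⨅ a : A i,
        ∫ b, (c i x b + β * ∫ y, Js δ i y ∂(p x b))
          ∂(Measure.pi (Function.update (fun j => π δ j x) i (Measure.dirac a))))
    -- J^i(π*_δ;·): the unique bounded fixed point giving the discounted cost of player i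
    -- in the original model under the extended joint equilibrium policy
    (Ji : ℝ → Fin N → X → ℝ)
    (hJi_bdd : ∀ δ > (0:ℝ), ∀ i, ∃ M : ℝ, ∀ x, |Ji δ i x| ≤ M)
    (hJi_fix : ∀ δ > (0:ℝ), ∀ i, ∀ x : X,
      Ji δ i x =
        ∫ b, (c i x b + β * ∫ y, Ji δ i y ∂(p x b))
          ∂(Measure.pi fun j => π δ j x)) :
    -- conclusion: uniform convergence as δ → 0
    ∀ i : Fin N,
      Tendsto (fun δ : ℝ => ⨆ x : X, |Ji δ i x - Js δ i x|) (𝓝[>] 0) (𝓝 0) := by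
  intro i
  have hX : CompactSpace (X × (∀ i, A i)) := inferInstance
  obtain ⟨C, hC⟩ := isCompact_univ.exists_bound_of_continuousOn (hc i).continuousOn
  have hC' : ∀ x b, |c i x b| ≤ C := fun x b => hC (x, b) (Set.mem_univ _)
  have hC0 : 0 ≤ C := (abs_nonneg _).trans
    (hC' (Classical.arbitrary X) (Classical.arbitrary _))
  have hβ : 0 < 1 - β := by linarith
  set ω : ℝ → ℝ := fun δ : ℝ => sSup {v : ℝ | ∃ x y : X, ∃ a b : ∀ i, A i,
        dist x y + dist a b ≤ 2 * δ ∧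
        v = tvDist ((p x a).map (Q δ)) ((p y b).map (Q δ))} with hωdef
  have hω : ∀ δ > (0:ℝ), ∀ x y a b, dist x y + dist a b ≤ 2 * δ →
      tvDist ((p x a).map (Q δ)) ((p y b).map (Q δ)) ≤ ω δ := by
    intro δ hδ x y a b hd
    refine le_csSup ⟨2, ?_⟩ ⟨x, y, a, b, hd, rfl⟩
    rintro _ ⟨x, y, a, b, _, rfl⟩
    have := Measure.isProbabilityMeasure_map (μ := p x a) (hQ_meas δ hδ).aemeasurable
    have := Measure.isProbabilityMeasure_map (μ := p y b) (hQ_meas δ hδ).aemeasurable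
    exact tvDist_le_two _ _
  have hmain : ∀ δ > (0:ℝ), ∀ e : ℝ,
      (∀ x y a b, dist x y + dist a b ≤ 2 * δ → |c i x a - c i y b| ≤ e) →
      ∀ x, |Ji δ i x - Js δ i x| ≤ 3 * (e + β * (C / (1 - β) * ω δ)) / (1 - β) := by
    intro δ hδ e he
    have hQd : ∀ x, dist x (Q δ x) ≤ δ := by
      intro x
      obtain ⟨z, hz, hd⟩ := hXd_net δ hδ x
      exact (hQ_near δ hδ x z hz).trans hd
    have hμ : ∀ z, ∀ j, IsProbabilityMeasure (π δ j z) := fun z j => hπ_prob δ hδ j z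
    have hpr : ∀ z, IsProbabilityMeasure (Measure.pi fun j => π δ j z) := fun z => inferInstance
    have hpi := fun z => pi_integral (fun j => π δ j z) (hμ z) (Ad δ) (fun j => hπ_supp δ hδ j z)
    have hpu := fun z => pi_update_integral (fun j => π δ j z) (hμ z) (Ad δ)
      (fun j => hπ_supp δ hδ j z) i
    have hcst : ∀ x, (fun j => π δ j x) = fun j => π δ j (Q δ x) :=
      fun x => funext fun j => hπ_const δ hδ j x
    obtain ⟨Ms, hMs⟩ := hJs_bdd δ hδ i
    obtain ⟨Mi, hMi⟩ := hJi_bdd δ hδ i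
    have hνp := hν_prob δ hδ
    have hcm : ∀ z, MeasurableSet (Q δ ⁻¹' {z}) :=
      fun z => hQ_meas δ hδ (measurableSet_singleton z)
    refine core_estimate i (c i) (hc i) C hC' p hp_prob hp_setwise β hβ0 hβ1 δ (Xd δ) (Q δ)
      (hQ_meas δ hδ) (hQ_mem δ hδ) ?_ (Ad δ i) (hAd_net δ hδ i) hδ
      (cellMeasure (ν δ) (Q δ)) ?_ ?_ (Fintype.piFinset (Ad δ))
      (fun z b => (Measure.pi fun j => π δ j z).real {b}) (fun z b => measureReal_nonneg) ?_
      e (ω δ) he (hω δ hδ) (Jd δ i) (hJd_const δ hδ i) ?_ ?_ (Js δ i) Ms hMs ?_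
      (Ji δ i) Mi hMi ?_
    · intro x y hxy
      have h1 := hQd x
      have h2 := hQd y
      rw [← hxy, dist_comm] at h2
      linarith [dist_triangle x (Q δ x) y]
    · intro z hz
      refine ⟨?_⟩
      simp only [cellMeasure, Measure.smul_apply, Measure.restrict_apply MeasurableSet.univ,
        Set.univ_inter, smul_eq_mul]
      exact ENNReal.inv_mul_cancel (hν_pos δ hδ z hz).ne' (measure_ne_top _ _)
    · intro z hz
      refine Measure.ae_smul_measure ?_ _
      exact ae_restrict_mem (hcm z)
    · intro z
      have := hpi z (fun _ => 1)
      simpa using this.symm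
    · intro z hz
      rw [hJd_rec δ hδ i z hz]
      simp only [hpu]
    · intro z hz
      rw [hJd_attain δ hδ i z hz]
      simp only [hpi]
    · intro x
      rw [hJs_fix δ hδ i x, hcst x]
      simp only [hpu]
    · intro x
      rw [hJi_fix δ hδ i x, hcst x]
      simp only [hpi]
  have huc := CompactSpace.uniformContinuous_of_continuous (hc i)
  rw [Metric.uniformContinuous_iff] at huc
  rw [Metric.tendsto_nhds]
  intro r hr
  set e := r * (1 - β) / 12 with hedef
  have he : 0 < e := by positivity
  obtain ⟨η, hη, hη'⟩ := huc e he
  have hlim : Tendsto (fun δ => β * (C / (1 - β) * ω δ)) (𝓝[>] 0) (𝓝 0) := by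
    have := (hquant.const_mul (C / (1 - β))).const_mul β
    simpa using this
  have h1 : ∀ᶠ δ in 𝓝[>] (0:ℝ), β * (C / (1 - β) * ω δ) < e := hlim.eventually_lt_const he
  have h2 : ∀ᶠ δ in 𝓝[>] (0:ℝ), δ < η / 2 :=
    (tendsto_nhdsWithin_of_tendsto_nhds tendsto_id).eventually_lt_const (by positivity)
  filter_upwards [h1, h2, self_mem_nhdsWithin] with δ hδ1 hδ2 hδ0
  have hb := hmain δ hδ0 e (by
    intro x y a b hd
    refine (le_of_lt ?_)
    have := hη' (a := (x, a)) (b := (y, b)) (by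
      rw [Prod.dist_eq]
      refine max_lt ?_ ?_
      · have := dist_nonneg (x := a) (y := b); simp only; linarith
      · have := dist_nonneg (x := x) (y := y); simp only; linarith)
    simpa [Real.dist_eq] using this)
  have hle : ⨆ x, |Ji δ i x - Js δ i x| ≤ 6 * e / (1 - β) := by
    refine ciSup_le fun x => (hb x).trans ?_
    refine div_le_div_of_nonneg_right ?_ hβ.le
    linarith
  have h0 : 0 ≤ ⨆ x, |Ji δ i x - Js δ i x| := Real.iSup_nonneg fun x => abs_nonneg _
  have h6 : 6 * e / (1 - β) = r / 2 := by rw [hedef]; field_simp; ring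
  rw [Real.dist_eq, sub_zero, abs_of_nonneg h0]
  linarith

end
end
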